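/- arXiv:math/0503725 — 2 statements merged into one kernel-verified Lean document; each statement's English description precedes it below -/
import Mathlib

section
/- Dual vertex-face correspondence: for all u, v ∈ ℂ (with every bracket and theta value appearing in a denominator nonzero, in particular [u], [v], [b] ≠ 0 for the heights involved), all ε₁, ε₂ ∈ {+1,−1}, and all a, b, c ∈ ℤ with |a−b| = |b−c| = 1, one has Σ_{ε₁', ε₂' ∈ {±1}} R̄(u−v)_{(ε₁',ε₂'),(ε₁,ε₂)} · ψ*_{ε₁'}(u)^a_b · ψ*_{ε₂'}(v)^b_c = Σ_{b' ∈ {a−1, a+1}, |b'−c| = 1} ψ*_{ε₂}(v)^a_{b'} · ψ*_{ε₁}(u)^{b'}_c · W̄(c, b'; b, a | u−v). -/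
noncomputable section

open Complex Finset

namespace Ell

/-- `x^s = exp(-iπ s /(r τ))`. -/
def xp (τ : ℂ) (r : ℝ) (s : ℂ) : ℂ :=
  Complex.exp (-Complex.I * (Real.pi : ℂ) * s / ((r : ℂ) * τ))

/-- `Θ_p(z) = ∏_{j ≥ 0} (1 - z p^j)(1 - p^{j+1}/z)(1 - p^{j+1})`. -/
def Theta (p z : ℂ) : ℂ :=
  ∏' j : ℕ, ((1 - z * p ^ j) * (1 - p ^ (j + 1) / z) * (1 - p ^ (j + 1)))

/-- The bracket `[u] = x^{u²/r - u} Θ_p(x^{2u})` with `p = x^{2r}`. -/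
def br (τ : ℂ) (r : ℝ) (u : ℂ) : ℂ :=
  xp τ r (u ^ 2 / (r : ℂ) - u) * Theta (xp τ r (2 * (r : ℂ))) (xp τ r (2 * u))

/-- Elliptic shifted factorial `[u]_n = ∏_{j=0}^{n-1} [u+j]`. -/
def brF (τ : ℂ) (r : ℝ) (u : ℂ) (n : ℕ) : ℂ :=
  ∏ j ∈ Finset.range n, br τ r (u + (j : ℂ))

/-- Elliptic binomial coefficient `C_n^k(α,β,γ)`. -/
def Cnk (τ : ℂ) (r : ℝ) (k n : ℕ) (α β γ : ℂ) : ℂ :=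
  brF τ r 1 k / (brF τ r 1 n * brF τ r 1 (k - n)) *
    (brF τ r (α - γ) n * brF τ r (α + γ + (k : ℂ) - (n : ℂ)) n *
      brF τ r (α - β) (k - n) * brF τ r (α + β + (n : ℂ)) (k - n)) /
    (brF τ r (β - γ + (n : ℂ) - (k : ℂ)) n * brF τ r (γ - β - (n : ℂ)) (k - n) *
      brF τ r (β + γ) k)

/-- The elliptic 6j-symbol `R_n^m(α,β,γ,δ;k)`. -/
def Rnm (τ : ℂ) (r : ℝ) (k n m : ℕ) (α β γ δ : ℂ) : ℂ :=
  ∑ j ∈ Finset.range (min n m + 1),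
    Cnk τ r n j α γ (β + (k : ℂ) - (n : ℂ)) * Cnk τ r (k - j) (m - j) β (γ + (j : ℂ)) δ

/-- Terminating very-well-poised elliptic hypergeometric sum with explicit
truncation `N`:  `Σ_{j=0}^N ([u₀+2j]/[u₀]) ([u₀]_j/[1]_j) ∏ᵢ [uᵢ]_j/[u₀+1-uᵢ]_j`. -/
def Vsum (τ : ℂ) (r : ℝ) (u₀ : ℂ) (us : List ℂ) (N : ℕ) : ℂ :=
  ∑ j ∈ Finset.range (N + 1),
    br τ r (u₀ + 2 * (j : ℂ)) / br τ r u₀ * (brF τ r u₀ j / brF τ r 1 j) *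
      (us.map fun ui => brF τ r ui j / brF τ r (u₀ + 1 - ui) j).prod

/-- "Every bracket appearing in a denominator of `C_n^k(·,β,γ)` is nonzero". -/
def CdenomNZ (τ : ℂ) (r : ℝ) (k n : ℕ) (β γ : ℂ) : Prop :=
  brF τ r 1 n ≠ 0 ∧ brF τ r 1 (k - n) ≠ 0 ∧
    brF τ r (β - γ + (n : ℂ) - (k : ℂ)) n ≠ 0 ∧
    brF τ r (γ - β - (n : ℂ)) (k - n) ≠ 0 ∧ brF τ r (β + γ) k ≠ 0

/-- "Every bracket appearing in a denominator of `R_n^m(α,β,γ,δ;k)` is nonzero". -/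
def RdenomNZ (τ : ℂ) (r : ℝ) (k n m : ℕ) (β γ δ : ℂ) : Prop :=
  ∀ j ≤ min n m,
    CdenomNZ τ r n j γ (β + (k : ℂ) - (n : ℂ)) ∧
      CdenomNZ τ r (k - j) (m - j) (γ + (j : ℂ)) δ

/-- Jacobi theta `ϑ₁(v|σ)`. -/
def th1 (v σ : ℂ) : ℂ :=
  2 * Complex.exp (2 * (Real.pi : ℂ) * Complex.I * σ / 8) *
    (∏' n : ℕ, (1 - Complex.exp (2 * (Real.pi : ℂ) * Complex.I * σ) ^ (n + 1))) *
    Complex.sin ((Real.pi : ℂ) * v) *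
    ∏' n : ℕ,
      (1 - 2 * Complex.exp (2 * (Real.pi : ℂ) * Complex.I * σ) ^ (n + 1) *
            Complex.cos (2 * (Real.pi : ℂ) * v) +
        Complex.exp (2 * (Real.pi : ℂ) * Complex.I * σ) ^ (2 * (n + 1)))

/-- Jacobi theta `ϑ₀(v|σ)`. -/
def th0 (v σ : ℂ) : ℂ :=
  -Complex.I * Complex.exp ((Real.pi : ℂ) * Complex.I * (v + σ / 4)) * th1 (v + σ / 2) σ

/-- Jacobi theta `ϑ₂(v|σ)`. -/
def th2 (v σ : ℂ) : ℂ := th1 (v + 1 / 2) σ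

/-- Jacobi theta `ϑ₃(v|σ)`. -/
def th3 (v σ : ℂ) : ℂ :=
  Complex.exp ((Real.pi : ℂ) * Complex.I * (v + σ / 4)) * th1 (v + (σ + 1) / 2) σ

/-- Intertwining vector component `ψ_ε(u)^a_b`, `ε ∈ {1, -1}`. -/
def psi (τ : ℂ) (r : ℝ) (u : ℂ) (ε : ℤ) (a b : ℤ) : ℂ :=
  if ε = 1 then th0 ((((a : ℂ) - (b : ℂ)) * u + (a : ℂ)) / (2 * (r : ℂ))) (τ / 2)
  else th3 ((((a : ℂ) - (b : ℂ)) * u + (a : ℂ)) / (2 * (r : ℂ))) (τ / 2)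

/-- The constant `C = x^{-r/4} e^{-iπ/4} τ^{1/2}`. -/
def Cc (τ : ℂ) (r : ℝ) : ℂ :=
  xp τ r (-(r : ℂ) / 4) * Complex.exp (-(Real.pi : ℂ) * Complex.I / 4) * τ ^ (1 / 2 : ℂ)

/-- Dual intertwining vector component `ψ*_ε(u)^a_b = -ε(a-b) C² ψ_{-ε}(u-1)^a_b/(2[b][u])`. -/
def psiStar (τ : ℂ) (r : ℝ) (u : ℂ) (ε : ℤ) (a b : ℤ) : ℂ :=
  -(ε : ℂ) * ((a : ℂ) - (b : ℂ)) * Cc τ r ^ 2 * psi τ r (u - 1) (-ε) a b /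
    (2 * br τ r (b : ℂ) * br τ r u)

/-- Sign attached to a boolean. -/
def sg (b : Bool) : ℤ := if b then 1 else -1

/-- Canonical path from `a`: up for `j ≤ n`, down afterwards. -/
def cpathZ (a n : ℤ) (j : ℕ) : ℤ := if (j : ℤ) ≤ n then a + j else a + 2 * n - j

/-- Admissibility: `a - b ∈ {-k, -k+2, …, k}`. -/
def adm (k : ℕ) (a b : ℤ) : Prop := (a - b).natAbs ≤ k ∧ (a - b - (k : ℤ)) % 2 = 0

instance (k : ℕ) (a b : ℤ) : Decidable (adm k a b) := by unfold adm; infer_instance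

/-- Fused intertwining vector component `ψ^{(k)}_μ(u)^a_b` (zero if `a,b` not admissible). -/
def psiF (τ : ℂ) (r : ℝ) (k : ℕ) (μ : ℤ) (u : ℂ) (a b : ℤ) : ℂ :=
  if adm k a b then
    ∑ ε ∈ Finset.univ.filter fun ε : Fin k → Bool => (∑ j, sg (ε j)) = μ,
      ∏ j : Fin k,
        psi τ r (u + (k : ℂ) - (((j : ℕ) + 1 : ℕ) : ℂ)) (sg (ε j))
          (cpathZ a (((k : ℤ) - (a - b)) / 2) (j : ℕ))
          (cpathZ a (((k : ℤ) - (a - b)) / 2) ((j : ℕ) + 1))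
  else 0

/-- Partial-sum path attached to a sign sequence `δ`, starting at `a`. -/
def spath (k : ℕ) (a : ℤ) (δ : Fin k → Bool) (j : ℕ) : ℤ :=
  a + ∑ i ∈ Finset.range j, if h : i < k then sg (δ ⟨i, h⟩) else 0

/-- Fused dual intertwining vector component `ψ*^{(k)}_μ(u)^b_a`
(sum over all admissible paths from `a` to `b`; zero if not admissible). -/
def psiStarF (τ : ℂ) (r : ℝ) (k : ℕ) (μ : ℤ) (u : ℂ) (b a : ℤ) : ℂ :=
  if adm k a b then
    ∑ δ ∈ Finset.univ.filter fun δ : Fin k → Bool => (∑ j, sg (δ j)) = b - a,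
      ∏ j : Fin k,
        psiStar τ r (u + (k : ℂ) - (((j : ℕ) + 1 : ℕ) : ℂ))
          (if ((j : ℕ) + 1 : ℤ) ≤ ((k : ℤ) + μ) / 2 then 1 else -1)
          (spath k a δ ((j : ℕ) + 1)) (spath k a δ (j : ℕ))
  else 0

/-- The `L`-matrix `L^{(k)}(a,b;c,d|u) = Σ_μ ψ*^{(k)}_μ(u)^d_c ψ^{(k)}_μ(u)^a_b`. -/
def Lk (τ : ℂ) (r : ℝ) (k : ℕ) (u : ℂ) (a b c d : ℤ) : ℂ :=
  ∑ i ∈ Finset.range (k + 1),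
    psiStarF τ r k ((k : ℤ) - 2 * (i : ℤ)) u d c * psiF τ r k ((k : ℤ) - 2 * (i : ℤ)) u a b

/-- Normalized face weight `W̄(a,b;d,c|u)` (arguments ordered (NW, NE; SW, SE)). -/
def Wb (τ : ℂ) (r : ℝ) (u : ℂ) (a b d c : ℤ) : ℂ :=
  if b = a + 1 ∧ d = a + 1 ∧ c = a + 2 then 1
  else if b = a - 1 ∧ d = a - 1 ∧ c = a - 2 then 1
  else if b = a + 1 ∧ d = a + 1 ∧ c = a then
    br τ r ((a : ℂ) - u) * br τ r 1 / (br τ r (a : ℂ) * br τ r (1 + u))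
  else if b = a - 1 ∧ d = a - 1 ∧ c = a then
    br τ r ((a : ℂ) + u) * br τ r 1 / (br τ r (a : ℂ) * br τ r (1 + u))
  else if b = a + 1 ∧ d = a - 1 ∧ c = a then
    br τ r ((a : ℂ) + 1) * br τ r u / (br τ r (a : ℂ) * br τ r (1 + u))
  else if b = a - 1 ∧ d = a + 1 ∧ c = a then
    br τ r ((a : ℂ) - 1) * br τ r u / (br τ r (a : ℂ) * br τ r (1 + u))
  else 0

/-- Sequence with prescribed endpoints `d`, `c` and free interior values `f`. -/
def seqI (k : ℕ) (d c : ℤ) (f : Fin (k - 1) → ℤ) (j : ℕ) : ℤ :=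
  if h0 : j = 0 then d
  else if hj : j < k then f ⟨j - 1, by omega⟩ else c

/-- Fused face weight `W^{(k,1)}(a,b;d,c|u)`. -/
def Wk1 (τ : ℂ) (r : ℝ) (k : ℕ) (u : ℂ) (a b d c : ℤ) : ℂ :=
  if adm k a b then
    ∑' f : Fin (k - 1) → ℤ,
      ∏ j ∈ Finset.range k,
        Wb τ r (u + (k : ℂ) - ((j : ℂ) + 1))
          (cpathZ a (((k : ℤ) - (a - b)) / 2) j)
          (cpathZ a (((k : ℤ) - (a - b)) / 2) (j + 1))
          (seqI k d c f j) (seqI k d c f (j + 1))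
  else 0

/-- Fused face weight `W^{(k,l)}(a,b;d,c|u)`. -/
def Wkl (τ : ℂ) (r : ℝ) (k l : ℕ) (u : ℂ) (a b d c : ℤ) : ℂ :=
  if adm l b c then
    ∑' g : Fin (l - 1) → ℤ,
      ∏ i ∈ Finset.range l,
        Wk1 τ r k (u - (l : ℂ) + ((i : ℂ) + 1))
          (seqI l a d g i) (cpathZ b (((l : ℤ) - (b - c)) / 2) i)
          (seqI l a d g (i + 1)) (cpathZ b (((l : ℤ) - (b - c)) / 2) (i + 1))
  else 0

/-- Eight-vertex weight `ā(u)`. -/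
def aw (τ : ℂ) (r : ℝ) (u : ℂ) : ℂ :=
  th2 (1 / (2 * (r : ℂ))) (τ / 2) * th2 (u / (2 * (r : ℂ))) (τ / 2) /
    (th2 0 (τ / 2) * th2 ((1 + u) / (2 * (r : ℂ))) (τ / 2))

/-- Eight-vertex weight `b̄(u)`. -/
def bw (τ : ℂ) (r : ℝ) (u : ℂ) : ℂ :=
  th2 (1 / (2 * (r : ℂ))) (τ / 2) * th1 (u / (2 * (r : ℂ))) (τ / 2) /
    (th2 0 (τ / 2) * th1 ((1 + u) / (2 * (r : ℂ))) (τ / 2))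

/-- Eight-vertex weight `c̄(u)`. -/
def cw (τ : ℂ) (r : ℝ) (u : ℂ) : ℂ :=
  th1 (1 / (2 * (r : ℂ))) (τ / 2) * th2 (u / (2 * (r : ℂ))) (τ / 2) /
    (th2 0 (τ / 2) * th1 ((1 + u) / (2 * (r : ℂ))) (τ / 2))

/-- Eight-vertex weight `d̄(u)`. -/
def dw (τ : ℂ) (r : ℝ) (u : ℂ) : ℂ :=
  -(th1 (1 / (2 * (r : ℂ))) (τ / 2) * th1 (u / (2 * (r : ℂ))) (τ / 2)) /
    (th2 0 (τ / 2) * th2 ((1 + u) / (2 * (r : ℂ))) (τ / 2))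

/-- The normalized eight-vertex `R`-matrix entry `R̄(u)_{(ε₁,ε₂),(ε₁',ε₂')}`. -/
def Rbar (τ : ℂ) (r : ℝ) (u : ℂ) (e1 e2 e1' e2' : ℤ) : ℂ :=
  if e1' = e1 ∧ e2' = e2 ∧ e1 = e2 then aw τ r u
  else if e1' = e1 ∧ e2' = e2 ∧ e1 = -e2 then bw τ r u
  else if e1' = e2 ∧ e2' = e1 ∧ e1 = -e2 then cw τ r u
  else if e1' = -e1 ∧ e2' = -e2 ∧ e1 = e2 then dw τ r u
  else 0

/-- Sklyanin standard-basis vector `v_+(z)`. -/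
def vp (τ z : ℂ) : ℂ := th3 (2 * z) (2 * τ) - th2 (2 * z) (2 * τ)

/-- Sklyanin standard-basis vector `v_-(z)`. -/
def vm (τ z : ℂ) : ℂ := th3 (2 * z) (2 * τ) + th2 (2 * z) (2 * τ)



lemma int_shift (g : ℂ → ℂ) (hg : Differentiable ℂ g) (hp : ∀ z, g (z + 1) = g z) (w : ℂ) :
    ∫ x in (0:ℝ)..1, g (x + w) = ∫ x in (0:ℝ)..1, g x := by
  have h := Complex.integral_boundary_rect_eq_zero_of_differentiableOn g 0 (1 + w.im * I)
    hg.differentiableOn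
  have e : ∀ y : ℝ, g (1 + y * I) = g (y * I) := fun y => by rw [add_comm, hp]
  simp [e] at h
  have h' : ∫ x in (0:ℝ)..1, g x = ∫ x in (0:ℝ)..1, g (x + w.im * I) := by
    linear_combination h
  rw [h']
  have hper : Function.Periodic (fun x : ℝ => g (x + w.im * I)) 1 := fun x => by
    have := hp (x + w.im * I)
    simp only [ofReal_add, ofReal_one]
    rw [← this]; ring_nf
  have h2 := hper.intervalIntegral_add_eq w.re 0
  rw [zero_add] at h2
  rw [← h2]
  have h3 := intervalIntegral.integral_comp_add_right (a := 0) (b := 1)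
    (fun x : ℝ => g (x + w.im * I)) w.re
  rw [zero_add, add_comm 1 w.re] at h3
  rw [← h3]
  refine intervalIntegral.integral_congr fun x _ => ?_
  simp only [ofReal_add]
  congr 1
  conv_lhs => rw [← Complex.re_add_im w]
  ring

lemma uniq (τ : ℂ) (hτ : 0 < τ.im) (f : ℂ → ℂ) (hf : Differentiable ℂ f)
    (hp : ∀ z, f (z + 1) = f z)
    (hq : ∀ z, f (z + τ) = cexp (-Real.pi * I * (τ + 2 * z)) * f z) :
    ∃ c, ∀ z, f z = c * jacobiTheta₂ z τ := by
  let c : ℤ → ℂ := fun n => ∫ x in (0:ℝ)..1, cexp (-2 * Real.pi * I * n * x) * f x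
  have hrec : ∀ n : ℤ, c (n + 1) = cexp (Real.pi * I * τ * (2 * n + 1)) * c n := by
    intro n
    have h := int_shift (fun z => cexp (-2 * Real.pi * I * n * z) * f z) (by fun_prop)
      (fun z => by
        simp only [hp]
        congr 1
        rw [mul_add, Complex.exp_add, mul_one,
          show (-2 * Real.pi * I * n : ℂ) = ((-n : ℤ) : ℂ) * (2 * Real.pi * I) by push_cast; ring,
          Complex.exp_int_mul_two_pi_mul_I, mul_one]) τ
    change _ = c n at h
    rw [← h]
    simp only [c]
    rw [← intervalIntegral.integral_const_mul]
    refine intervalIntegral.integral_congr fun x _ => ?_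
    simp only [hq]
    rw [← mul_assoc, ← mul_assoc, ← Complex.exp_add, ← Complex.exp_add]
    congr 2
    push_cast
    ring
  have hc : ∀ n : ℤ, c n = c 0 * cexp (Real.pi * I * n ^ 2 * τ) := by
    intro n
    induction n using Int.induction_on with
    | zero => simp
    | succ k ih =>
      rw [hrec, ih, mul_left_comm, ← Complex.exp_add]
      congr 2; push_cast; ring
    | pred k ih =>
      have h := hrec (-(k:ℤ) - 1)
      rw [sub_add_cancel, ih] at h
      have e : cexp (Real.pi * I * τ * (2 * ((-(k:ℤ) - 1 : ℤ) : ℂ) + 1)) ≠ 0 := Complex.exp_ne_zero _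
      apply mul_left_cancel₀ e
      rw [← h, mul_left_comm, ← Complex.exp_add]
      congr 2; push_cast; ring
  have hper : Function.Periodic (fun x : ℝ => f x) 1 := fun x => by
    simp [hp]
  let F : C(UnitAddCircle, ℂ) :=
    ⟨hper.lift, continuous_coinduced_dom.mpr (by
      change Continuous (fun x : ℝ => f x)
      exact hf.continuous.comp Complex.continuous_ofReal)⟩
  have hFc : ∀ n, fourierCoeff F n = c n := by
    intro n
    rw [fourierCoeff_eq_intervalIntegral _ n 0]
    simp only [div_one, one_smul, zero_add, c]
    refine intervalIntegral.integral_congr fun x _ => ?_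
    simp only [F, ContinuousMap.coe_mk, Function.Periodic.lift_coe, smul_eq_mul, fourier_coe_apply]
    congr 2
    push_cast
    ring
  have hsum : Summable (fourierCoeff F) := by
    rw [show fourierCoeff F = fun n => c 0 * jacobiTheta₂_term n 0 τ by
      ext n; rw [hFc, hc, jacobiTheta₂_term]; simp]
    exact ((summable_jacobiTheta₂_term_iff 0 τ).2 hτ).mul_left _
  have hreal : ∀ x : ℝ, f x = c 0 * jacobiTheta₂ x τ := by
    intro x
    have h := (has_pointwise_sum_fourier_series_of_summable hsum (x : UnitAddCircle)).tsum_eq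
    simp only [F, ContinuousMap.coe_mk, Function.Periodic.lift_coe] at h
    rw [← h, jacobiTheta₂, ← tsum_mul_left]
    refine tsum_congr fun n => ?_
    change fourierCoeff F n • _ = _
    rw [hFc, hc, jacobiTheta₂_term, fourier_coe_apply, smul_eq_mul, mul_assoc, ← Complex.exp_add]
    congr 2
    push_cast
    ring
  refine ⟨c 0, ?_⟩
  have hg : Differentiable ℂ (fun z => c 0 * jacobiTheta₂ z τ) := fun z =>
    (differentiableAt_jacobiTheta₂_fst z hτ).const_mul _
  have := AnalyticOnNhd.eq_of_frequently_eq (z₀ := (0:ℂ))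
    (f := f) (g := fun z => c 0 * jacobiTheta₂ z τ)
    (fun z _ => hf.analyticAt z) (fun z _ => hg.analyticAt z) (by
      have ht : Filter.Tendsto (fun n : ℕ => (((1 / ((n:ℝ) + 1) : ℝ)) : ℂ)) Filter.atTop
          (nhdsWithin 0 {0}ᶜ) := by
        apply tendsto_nhdsWithin_iff.2
        refine ⟨?_, Filter.Eventually.of_forall fun n => ?_⟩
        · have := (Complex.continuous_ofReal.tendsto 0).comp
            (tendsto_one_div_add_atTop_nhds_zero_nat (𝕜 := ℝ))
          simpa [Function.comp_def] using this
        · simp only [Set.mem_compl_iff, Set.mem_singleton_iff, ofReal_eq_zero]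
          positivity
      exact ht.frequently (Filter.Frequently.of_forall fun n => hreal _))
  exact fun z => congrFun this z

/-- q-Pochhammer -/
def Qp (p z : ℂ) : ℂ := ∏' j : ℕ, (1 - z * p ^ j)

lemma Qp_mult {p : ℂ} (hp : ‖p‖ < 1) (z : ℂ) : Multipliable fun j : ℕ => (1 - z * p ^ j) := by
  simp_rw [sub_eq_add_neg]
  apply multipliable_one_add_of_summable (f := fun n ↦ -(z * p ^ n))
  simpa using (summable_geometric_of_lt_one (norm_nonneg _) hp).mul_left _

lemma Qp_shift {p : ℂ} (hp : ‖p‖ < 1) (z : ℂ) : Qp p z = (1 - z) * Qp p (p * z) := by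
  rw [Qp, tprod_eq_zero_mul', Qp]
  · simp [pow_succ, mul_assoc, mul_left_comm, mul_comm]
  · have := Qp_mult hp (z * p)
    simpa [pow_succ, mul_assoc, mul_left_comm, mul_comm] using this

lemma Qp_diff {p : ℂ} (hp : ‖p‖ < 1) : Differentiable ℂ (Qp p) := by
  rw [← differentiableOn_univ]
  have : HasProdLocallyUniformlyOn (fun (n : ℕ) (z : ℂ) => 1 - z * p ^ n) (Qp p) Set.univ := by
    unfold Qp
    simp_rw [sub_eq_add_neg]
    apply hasProdLocallyUniformlyOn_of_forall_compact isOpen_univ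
    intro K _ hcK
    obtain ⟨M, hM⟩ := hcK.isBounded.exists_norm_le
    refine ((summable_geometric_of_lt_one (norm_nonneg _) hp).mul_left
      M).hasProdUniformlyOn_nat_one_add hcK (.of_forall fun n x hx ↦ ?_) (fun _ ↦ by fun_prop)
    simp only [norm_neg, norm_mul, norm_pow]
    gcongr
    exact hM x hx
  exact this.differentiableOn
    (.of_forall fun _ ↦ by simpa [Finset.prod_fn] using
      DifferentiableOn.finsetProd (fun _ _ ↦ by fun_prop)) isOpen_univ

lemma exp_I_pi' : cexp (Real.pi * I) = -1 := Complex.exp_pi_mul_I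

def j3 (v σ : ℂ) : ℂ := jacobiTheta₂ v σ
def j0 (v σ : ℂ) : ℂ := jacobiTheta₂ (v + 1 / 2) σ
def j2 (v σ : ℂ) : ℂ := cexp (Real.pi * I * (v + σ / 4)) * jacobiTheta₂ (v + σ / 2) σ
def j1 (v σ : ℂ) : ℂ := -I * cexp (Real.pi * I * (v + σ / 4)) * jacobiTheta₂ (v + 1 / 2 + σ / 2) σ

lemma uniq' (τ : ℂ) (hτ : 0 < τ.im) (f : ℂ → ℂ) (hf : Differentiable ℂ f)
    (hp : ∀ z, f (z + 1) = - f z)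
    (hq : ∀ z, f (z + τ) = -cexp (-Real.pi * I * (τ + 2 * z)) * f z) :
    ∃ c, ∀ z, f z = c * j1 z τ := by
  obtain ⟨c, hc⟩ := uniq τ hτ (fun z => cexp (-Real.pi * I * z) * f (z - 1 / 2 - τ / 2))
    (by fun_prop)
    (fun z => by
      rw [show z + 1 - 1 / 2 - τ / 2 = (z - 1 / 2 - τ / 2) + 1 by ring, hp, mul_add,
        Complex.exp_add, mul_one, show -(Real.pi : ℂ) * I = -(Real.pi * I) by ring,
        Complex.exp_neg (Real.pi * I), Complex.exp_pi_mul_I]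
      norm_num)
    (fun z => by
      rw [show z + τ - 1 / 2 - τ / 2 = (z - 1 / 2 - τ / 2) + τ by ring, hq, ← mul_assoc,
        ← mul_assoc, mul_neg, ← Complex.exp_add, ← Complex.exp_add]
      congr 1
      rw [show -(Real.pi : ℂ) * I * (z + τ) + -Real.pi * I * (τ + 2 * (z - 1 / 2 - τ / 2)) =
        (-Real.pi * I * (τ + 2 * z) + -Real.pi * I * z) + Real.pi * I by ring, Complex.exp_add _ (Real.pi * I),
        Complex.exp_pi_mul_I]
      ring)
  refine ⟨c * (cexp (Real.pi * I * (1 / 2 + τ / 4))) * I, fun z => ?_⟩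
  have h := hc (z + 1 / 2 + τ / 2)
  rw [show z + 1 / 2 + τ / 2 - 1 / 2 - τ / 2 = z by ring] at h
  have h2 : f z = cexp (Real.pi * I * (z + 1 / 2 + τ / 2)) *
      (cexp (-Real.pi * I * (z + 1 / 2 + τ / 2)) * f z) := by
    rw [← mul_assoc, ← Complex.exp_add]
    ring_nf
    simp
  rw [h2, h, j1, show (Real.pi : ℂ) * I * (z + 1 / 2 + τ / 2) =
    Real.pi * I * (1 / 2 + τ / 4) + Real.pi * I * (z + τ / 4) by ring, Complex.exp_add]
  linear_combination (c * cexp (Real.pi * I * (1 / 2 + τ / 4)) * cexp (Real.pi * I * (z + τ / 4)) *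
    jacobiTheta₂ (z + 1 / 2 + τ / 2) τ) * (Complex.I_sq)

lemma Theta_eq {p : ℂ} (hp : ‖p‖ < 1) (z : ℂ) :
    Theta p z = Qp p z * Qp p (p / z) * Qp p p := by
  have h1 := Qp_mult hp z
  have h2 := Qp_mult hp (p / z)
  have h3 := Qp_mult hp p
  rw [Qp, Qp, Qp, ← h1.tprod_mul h2, ← (h1.mul h2).tprod_mul h3, Theta]
  refine tprod_congr fun j => ?_
  ring

lemma Theta_shift {p : ℂ} (hp : ‖p‖ < 1) (hp0 : p ≠ 0) (z : ℂ) (hz : z ≠ 0) :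
    Theta p (p * z) = - z⁻¹ * Theta p z := by
  rw [Theta_eq hp, Theta_eq hp, Qp_shift hp z, show p / (p * z) = z⁻¹ by field_simp,
    Qp_shift hp z⁻¹, div_eq_mul_inv]
  field_simp
  ring

lemma Theta_diff {p : ℂ} (hp : ‖p‖ < 1) (k : ℂ) :
    Differentiable ℂ (fun z => Theta p (cexp (k * z))) := by
  have h := Qp_diff hp
  simp_rw [Theta_eq hp, div_eq_mul_inv, ← Complex.exp_neg]
  have h1 : Differentiable ℂ (fun z => Qp p (cexp (k * z))) := h.comp (by fun_prop)
  have h2 : Differentiable ℂ (fun z => Qp p (p * cexp (-(k * z)))) := h.comp (by fun_prop)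
  exact (h1.mul h2).mul_const _

lemma th1_eq_Theta (v σ : ℂ) (hσ : 0 < σ.im) :
    th1 v σ = I * cexp (2 * Real.pi * I * σ / 8) * (cexp (-(Real.pi * I * v)) *
      Theta (cexp (2 * Real.pi * I * σ)) (cexp (2 * Real.pi * I * v))) := by
  set q := cexp (2 * Real.pi * I * σ) with hq
  have hq1 : ‖q‖ < 1 := by
    rw [hq]; exact UpperHalfPlane.norm_exp_two_pi_I_lt_one ⟨σ, hσ⟩
  set w := cexp (2 * Real.pi * I * v) with hw
  have hw0 : w ≠ 0 := Complex.exp_ne_zero _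
  rw [Theta_eq hq1, Qp_shift hq1 w, th1]
  have e1 : (∏' n : ℕ, (1 - q ^ (n + 1))) = Qp q q := by
    rw [Qp]; exact tprod_congr fun j => by ring
  have hcos : 2 * Complex.cos (2 * Real.pi * v) = w + w⁻¹ := by
    rw [Complex.two_cos, hw, ← Complex.exp_neg]; ring_nf
  have e2 : (∏' n : ℕ, (1 - 2 * q ^ (n + 1) * Complex.cos (2 * Real.pi * v) + q ^ (2 * (n + 1))))
      = Qp q (q * w) * Qp q (q / w) := by
    rw [Qp, Qp, ← (Qp_mult hq1 (q * w)).tprod_mul (Qp_mult hq1 (q / w))]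
    refine tprod_congr fun j => ?_
    have : 1 - 2 * q ^ (j + 1) * Complex.cos (2 * Real.pi * v) + q ^ (2 * (j + 1)) =
      1 - q ^ (j + 1) * (w + w⁻¹) + q ^ (2 * (j + 1)) := by rw [← hcos]; ring
    rw [this]
    field_simp
    ring
  have hsin : 2 * Complex.sin (Real.pi * v) = I * cexp (-(Real.pi * I * v)) * (1 - w) := by
    rw [Complex.two_sin, hw, mul_sub, mul_assoc I _ (cexp (2 * Real.pi * I * v)), ← Complex.exp_add]
    ring_nf
  rw [e1, e2]
  linear_combination (cexp (2 * Real.pi * I * σ / 8) * Qp q q * (Qp q (q * w) * Qp q (q / w))) * hsin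

lemma th1_eq (σ : ℂ) (hσ : 0 < σ.im) : ∃ κ, ∀ v, th1 v σ = κ * j1 v σ := by
  have hq1 : ‖cexp (2 * Real.pi * I * σ)‖ < 1 :=
    UpperHalfPlane.norm_exp_two_pi_I_lt_one ⟨σ, hσ⟩
  have hd := Theta_diff hq1 (2 * Real.pi * I)
  obtain ⟨c, hc⟩ := uniq' σ hσ (fun v => cexp (-(Real.pi * I * v)) *
      Theta (cexp (2 * Real.pi * I * σ)) (cexp (2 * Real.pi * I * v)))
    ((by fun_prop : Differentiable ℂ fun v : ℂ => cexp (-(Real.pi * I * v))).mul hd)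
    (fun z => by
      rw [mul_add (2 * Real.pi * I : ℂ), mul_one, Complex.exp_add, Complex.exp_two_pi_mul_I, mul_one, mul_add,
        neg_add, Complex.exp_add, mul_one, Complex.exp_neg (Real.pi * I), Complex.exp_pi_mul_I]
      norm_num)
    (fun z => by
      rw [mul_add (2 * Real.pi * I : ℂ), Complex.exp_add, mul_comm (cexp (2 * Real.pi * I * z)), Theta_shift hq1 (Complex.exp_ne_zero _) _ (Complex.exp_ne_zero _),
        ← Complex.exp_neg]
      rw [neg_mul (cexp _), neg_mul (cexp _), mul_neg, ← mul_assoc, ← mul_assoc, ← Complex.exp_add, ← Complex.exp_add]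
      congr 3
      ring)
  refine ⟨I * cexp (2 * Real.pi * I * σ / 8) * c, fun v => ?_⟩
  rw [th1_eq_Theta v σ hσ, hc v]
  ring

lemma br_eq (τ : ℂ) (r : ℝ) (hτ : 0 < τ.im) (hr : 0 < r) :
    ∃ K, ∀ u, br τ r u = K * j1 (u / r) τ := by
  have hr0 : (r : ℂ) ≠ 0 := by exact_mod_cast hr.ne'
  have hτ0 : τ ≠ 0 := by rintro rfl; simp at hτ
  set p := cexp (-2 * Real.pi * I / τ) with hpd
  have hp1 : ‖p‖ < 1 := by
    have h : 0 < (-1 / τ).im := by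
      rw [neg_div, one_div, Complex.neg_im, Complex.inv_im, neg_div, neg_neg]
      exact div_pos hτ (Complex.normSq_pos.2 hτ0)
    have := UpperHalfPlane.norm_exp_two_pi_I_lt_one ⟨-1 / τ, h⟩
    rw [hpd]
    convert this using 3
    simp only []
    ring
  have hd := Theta_diff hp1 (-2 * Real.pi * I / τ)
  obtain ⟨c, hc⟩ := uniq' τ hτ (fun z => cexp (-(Real.pi * I * (z ^ 2 - z) / τ)) *
      Theta p (cexp (-2 * Real.pi * I / τ * z)))
    ((by fun_prop : Differentiable ℂ fun z : ℂ => cexp (-(Real.pi * I * (z ^ 2 - z) / τ))).mul hd)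
    (fun z => by
      rw [mul_add, mul_one, Complex.exp_add, ← hpd, mul_comm _ p, Theta_shift hp1 (Complex.exp_ne_zero _) _ (Complex.exp_ne_zero _),
        ← Complex.exp_neg]
      rw [neg_mul (cexp _), mul_neg, ← mul_assoc, ← Complex.exp_add]
      congr 3
      field_simp
      ring)
    (fun z => by
      rw [mul_add, show (-2 * Real.pi * I / τ * τ : ℂ) = -(2 * Real.pi * I) by field_simp,
        Complex.exp_add, Complex.exp_neg (2 * Real.pi * I), Complex.exp_two_pi_mul_I, inv_one,
        mul_one, ← mul_assoc, neg_mul (cexp _), ← Complex.exp_add]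
      congr 1
      rw [← neg_one_mul (cexp _), ← Complex.exp_pi_mul_I, ← Complex.exp_add]
      congr 1
      field_simp
      ring)
  refine ⟨c, fun u => ?_⟩
  rw [← hc, br, xp, xp, xp]
  congr 2
  · congr 1; field_simp
  · rw [hpd]; congr 1; field_simp
  · congr 1; field_simp

lemma parity_equiv_sum (f : ℤ × ℤ → ℂ) (hf : Summable f) :
    ∑' x, f x = (∑' x : ℤ × ℤ, f (x.1 + x.2, x.1 - x.2)) +
      ∑' x : ℤ × ℤ, f (x.1 + x.2 + 1, x.1 - x.2) := by
  let e : (ℤ × ℤ) ⊕ (ℤ × ℤ) → ℤ × ℤ :=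
    Sum.elim (fun x => (x.1 + x.2, x.1 - x.2)) (fun x => (x.1 + x.2 + 1, x.1 - x.2))
  have he : Function.Bijective e := by
    constructor
    · rintro (⟨a, b⟩ | ⟨a, b⟩) (⟨c, d⟩ | ⟨c, d⟩) h <;>
        simp only [e, Sum.elim_inl, Sum.elim_inr, Prod.mk.injEq, Sum.inl.injEq, Sum.inr.injEq,
          reduceCtorEq] at h ⊢ <;> omega
    · rintro ⟨m, n⟩
      rcases Int.even_or_odd' (m + n) with ⟨k, hk | hk⟩
      · exact ⟨Sum.inl (k, m - k), by simp only [e, Sum.elim_inl, Prod.mk.injEq]; omega⟩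
      · exact ⟨Sum.inr (k, m - k - 1), by simp only [e, Sum.elim_inr, Prod.mk.injEq]; omega⟩
  rw [← (Equiv.ofBijective e he).tsum_eq f]
  have hs : Summable (fun x => f (Equiv.ofBijective e he x)) :=
    (Equiv.ofBijective e he).summable_iff.2 hf
  have h1 := hs.comp_injective (i := Sum.inl) Sum.inl_injective
  have h2 := hs.comp_injective (i := Sum.inr) Sum.inr_injective
  exact (HasSum.sum h1.hasSum h2.hasSum).tsum_eq

lemma J_prod (x y σ : ℂ) (hσ : 0 < σ.im) :
    jacobiTheta₂ x σ * jacobiTheta₂ y σ =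
      jacobiTheta₂ (x + y) (2 * σ) * jacobiTheta₂ (x - y) (2 * σ) +
      cexp (Real.pi * I * (σ + 2 * x)) *
        (jacobiTheta₂ (x + y + σ) (2 * σ) * jacobiTheta₂ (x - y + σ) (2 * σ)) := by
  have h2 : 0 < (2 * σ).im := by simpa using hσ
  have S : ∀ (z ρ : ℂ), 0 < ρ.im → Summable (fun n => ‖jacobiTheta₂_term n z ρ‖) := fun z ρ h =>
    ((summable_jacobiTheta₂_term_iff z ρ).2 h).norm
  have T : ∀ (z w ρ : ℂ), 0 < ρ.im → jacobiTheta₂ z ρ * jacobiTheta₂ w ρ =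
      ∑' p : ℤ × ℤ, jacobiTheta₂_term p.1 z ρ * jacobiTheta₂_term p.2 w ρ := fun z w ρ h =>
    tsum_mul_tsum_of_summable_norm (S z ρ h) (S w ρ h)
  rw [T _ _ _ hσ, T _ _ _ h2, T _ _ _ h2,
    parity_equiv_sum _ (summable_mul_of_summable_norm (S x σ hσ) (S y σ hσ)), ← tsum_mul_left]
  congr 1
  · refine tsum_congr fun p => ?_
    simp only [jacobiTheta₂_term, ← Complex.exp_add]
    congr 1
    push_cast
    ring
  · refine tsum_congr fun p => ?_
    simp only [jacobiTheta₂_term, ← Complex.exp_add]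
    congr 1
    push_cast
    ring

lemma p33 (x y σ : ℂ) (hσ : 0 < σ.im) : j3 x σ * j3 y σ =
    j3 (x + y) (2 * σ) * j3 (x - y) (2 * σ) + j2 (x + y) (2 * σ) * j2 (x - y) (2 * σ) := by
  simp only [j3, j2]
  rw [J_prod x y σ hσ, show cexp (Real.pi * I * (σ + 2 * x)) =
    cexp (Real.pi * I * (x + y + 2 * σ / 4)) * cexp (Real.pi * I * (x - y + 2 * σ / 4)) by
      rw [← Complex.exp_add]; ring_nf, show 2 * σ / 2 = σ by ring]
  ring

lemma exp_half : cexp (Real.pi * I * (1 / 2)) = I := by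
  rw [show (Real.pi * I * (1 / 2) : ℂ) = Real.pi / 2 * I by ring, Complex.exp_pi_div_two_mul_I]

lemma j3_half (x σ : ℂ) : j3 (x + 1 / 2) σ = j0 x σ := rfl
lemma j3_one (x σ : ℂ) : j3 (x + 1) σ = j3 x σ := jacobiTheta₂_add_left x σ
lemma j0_half (x σ : ℂ) : j0 (x + 1 / 2) σ = j3 x σ := by
  rw [← j3_one, j0, j3]; ring_nf
lemma j2_half (x σ : ℂ) : j2 (x + 1 / 2) σ = - j1 x σ := by
  rw [j2, j1, show (Real.pi * I * (x + 1 / 2 + σ / 4) : ℂ) = Real.pi * I * (x + σ / 4) +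
    Real.pi * I * (1 / 2) by ring, Complex.exp_add, exp_half]
  ring
lemma j2_one (x σ : ℂ) : j2 (x + 1) σ = - j2 x σ := by
  rw [j2, j2, show (Real.pi * I * (x + 1 + σ / 4) : ℂ) = Real.pi * I * (x + σ / 4) +
    Real.pi * I by ring, Complex.exp_add, Complex.exp_pi_mul_I,
    show x + 1 + σ / 2 = x + σ / 2 + 1 by ring, jacobiTheta₂_add_left]
  ring
lemma j1_half (x σ : ℂ) : j1 (x + 1 / 2) σ = j2 x σ := by
  have h := j2_half (x + 1 / 2) σ
  rw [show x + 1 / 2 + 1 / 2 = x + 1 by ring, j2_one] at h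
  linear_combination h
lemma j3_half' (x σ : ℂ) : j3 (x - 1 / 2) σ = j0 x σ := by
  rw [← j0_half]; ring_nf
lemma j2_half' (x σ : ℂ) : j2 (x - 1 / 2) σ = j1 x σ := by
  rw [← j1_half]; ring_nf

lemma j3_neg (x σ : ℂ) : j3 (-x) σ = j3 x σ := jacobiTheta₂_neg_left x σ
lemma j0_neg (x σ : ℂ) : j0 (-x) σ = j0 x σ := by
  rw [← j3_half, ← j3_neg, ← j3_half']; ring_nf
lemma j2_neg (x σ : ℂ) : j2 (-x) σ = j2 x σ := by
  rw [j2, j2, show x + σ / 2 = -(-x + σ / 2) + σ + 0 by ring, add_zero, jacobiTheta₂_add_left',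
    jacobiTheta₂_neg_left, ← mul_assoc, ← Complex.exp_add]
  congr 2
  ring
lemma j1_neg (x σ : ℂ) : j1 (-x) σ = - j1 x σ := by
  rw [← j2_half', ← neg_neg (j2 _ _), ← j2_half, ← j2_neg]; ring_nf

lemma p00 (x y σ : ℂ) (hσ : 0 < σ.im) : j0 x σ * j0 y σ =
    j3 (x + y) (2 * σ) * j3 (x - y) (2 * σ) - j2 (x + y) (2 * σ) * j2 (x - y) (2 * σ) := by
  rw [← j3_half, ← j3_half, p33 _ _ _ hσ, show x + 1 / 2 + (y + 1 / 2) = x + y + 1 by ring,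
    show x + 1 / 2 - (y + 1 / 2) = x - y by ring, j3_one, j2_one]
  ring

lemma p03 (x y σ : ℂ) (hσ : 0 < σ.im) : j0 x σ * j3 y σ =
    j0 (x + y) (2 * σ) * j0 (x - y) (2 * σ) + j1 (x + y) (2 * σ) * j1 (x - y) (2 * σ) := by
  rw [← j3_half, p33 _ _ _ hσ, show x + 1 / 2 + y = x + y + 1 / 2 by ring,
    show x + 1 / 2 - y = x - y + 1 / 2 by ring, j3_half, j2_half, j3_half, j2_half]
  ring

lemma p30 (x y σ : ℂ) (hσ : 0 < σ.im) : j3 x σ * j0 y σ =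
    j0 (x + y) (2 * σ) * j0 (x - y) (2 * σ) - j1 (x + y) (2 * σ) * j1 (x - y) (2 * σ) := by
  rw [mul_comm, p03 _ _ _ hσ, show y - x = -(x - y) by ring, j0_neg, j1_neg, add_comm y x]
  ring

lemma p22 (x y σ : ℂ) (hσ : 0 < σ.im) : j2 x σ * j2 y σ =
    j2 (x + y) (2 * σ) * j3 (x - y) (2 * σ) + j3 (x + y) (2 * σ) * j2 (x - y) (2 * σ) := by
  simp only [j2, j3]
  have h := J_prod (x + σ / 2) (y + σ / 2) σ hσ
  rw [show x + σ / 2 + (y + σ / 2) = x + y + σ by ring,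
    show x + σ / 2 - (y + σ / 2) = x - y by ring,
    show x + y + σ + σ = x + y + 2 * σ by ring, jacobiTheta₂_add_left'] at h
  rw [show 2 * σ / 2 = σ by ring, mul_mul_mul_comm, h, mul_add]
  rw [show cexp (Real.pi * I * (x + y + 2 * σ / 4)) =
    cexp (Real.pi * I * (x + σ / 4)) * cexp (Real.pi * I * (y + σ / 4)) by
      rw [← Complex.exp_add]; ring_nf,
    show cexp (Real.pi * I * (x - y + 2 * σ / 4)) =
    cexp (Real.pi * I * (x + σ / 4)) * cexp (Real.pi * I * (y + σ / 4)) *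
    cexp (Real.pi * I * (σ + 2 * (x + σ / 2))) * cexp (-Real.pi * I * (2 * σ + 2 * (x + y))) by
      simp only [← Complex.exp_add]; ring_nf]
  ring

lemma p21 (x y σ : ℂ) (hσ : 0 < σ.im) : j2 x σ * j1 y σ =
    j1 (x + y) (2 * σ) * j0 (x - y) (2 * σ) - j0 (x + y) (2 * σ) * j1 (x - y) (2 * σ) := by
  rw [← neg_neg (j1 y σ), ← j2_half, mul_neg, p22 _ _ _ hσ,
    show x + (y + 1 / 2) = x + y + 1 / 2 by ring,
    show x - (y + 1 / 2) = x - y - 1 / 2 by ring, j2_half, j3_half, j2_half', j3_half']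
  ring

lemma p12 (x y σ : ℂ) (hσ : 0 < σ.im) : j1 x σ * j2 y σ =
    j1 (x + y) (2 * σ) * j0 (x - y) (2 * σ) + j0 (x + y) (2 * σ) * j1 (x - y) (2 * σ) := by
  rw [mul_comm, p21 _ _ _ hσ, show y - x = -(x - y) by ring, j0_neg, j1_neg, add_comm y x]
  ring

lemma p11 (x y σ : ℂ) (hσ : 0 < σ.im) : j1 x σ * j1 y σ =
    j3 (x + y) (2 * σ) * j2 (x - y) (2 * σ) - j2 (x + y) (2 * σ) * j3 (x - y) (2 * σ) := by
  rw [← neg_neg (j1 y σ), ← j2_half, ← neg_neg (j1 x σ), ← j2_half, neg_mul_neg, p22 _ _ _ hσ,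
    show x + 1 / 2 + (y + 1 / 2) = x + y + 1 by ring,
    show x + 1 / 2 - (y + 1 / 2) = x - y by ring, j3_one, j2_one]
  ring

def QI (g : ℂ → ℂ) (ε : ℂ) (t : ℂ → ℂ) : Prop :=
  (∀ x, g (-x) = ε * g x) ∧ ε * ε = 1 ∧ (∀ x, t (-x) = - t x) ∧ ∀ η U A,
    g (η - U) * g (2 * A - η + U) * t (2 * A) * t (2 * η + 2 * U) =
      g (η + U) * g (2 * A - η - U) * t (2 * A + 2 * U) * t (2 * η) +
      ε * (g (η + U) * g (2 * A + η + U) * t (2 * U) * t (2 * A - 2 * η))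

lemma quad_aux (σ : ℂ) (hσ : 0 < σ.im) (η U A : ℂ) :
    (j1 (2 * A) σ * j1 (2 * η + 2 * U) σ =
      j3 (2 * A + 2 * η + 2 * U) (2 * σ) * j2 (2 * η + 2 * U - 2 * A) (2 * σ) -
      j2 (2 * A + 2 * η + 2 * U) (2 * σ) * j3 (2 * η + 2 * U - 2 * A) (2 * σ)) ∧
    (j1 (2 * A + 2 * U) σ * j1 (2 * η) σ =
      j3 (2 * A + 2 * η + 2 * U) (2 * σ) * j2 (2 * A + 2 * U - 2 * η) (2 * σ) -
      j2 (2 * A + 2 * η + 2 * U) (2 * σ) * j3 (2 * A + 2 * U - 2 * η) (2 * σ)) ∧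
    (j1 (2 * U) σ * j1 (2 * A - 2 * η) σ =
      j3 (2 * A + 2 * U - 2 * η) (2 * σ) * j2 (2 * η + 2 * U - 2 * A) (2 * σ) -
      j2 (2 * A + 2 * U - 2 * η) (2 * σ) * j3 (2 * η + 2 * U - 2 * A) (2 * σ)) := by
  refine ⟨?_, ?_, ?_⟩ <;> rw [p11 _ _ _ hσ]
  · rw [show 2 * A - (2 * η + 2 * U) = -(2 * η + 2 * U - 2 * A) by ring, j2_neg, j3_neg]
    ring_nf
  · ring_nf
  · ring_nf

lemma arg_aux (η U A : ℂ) :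
    η - U + (2 * A - η + U) = 2 * A ∧ η - U - (2 * A - η + U) = -(2 * A + 2 * U - 2 * η) ∧
    η + U + (2 * A - η - U) = 2 * A ∧ η + U - (2 * A - η - U) = 2 * η + 2 * U - 2 * A ∧
    η + U + (2 * A + η + U) = 2 * A + 2 * η + 2 * U ∧ η + U - (2 * A + η + U) = -(2 * A) := by
  refine ⟨?_, ?_, ?_, ?_, ?_, ?_⟩ <;> ring

lemma QI3 (σ : ℂ) (hσ : 0 < σ.im) : QI (fun x => j3 x σ) 1 (fun x => j1 x σ) := by
  refine ⟨fun x => by simp [j3_neg], by norm_num, fun x => j1_neg x σ, fun η U A => ?_⟩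
  obtain ⟨e1, e2, e3⟩ := quad_aux σ hσ η U A
  obtain ⟨a1, a2, a3, a4, a5, a6⟩ := arg_aux η U A
  simp only []
  rw [mul_assoc _ (j1 _ _), mul_assoc _ (j1 _ _), mul_assoc _ (j1 _ _), e1, e2, e3, p33 _ _ _ hσ,
    p33 _ _ _ hσ, p33 _ _ _ hσ, a1, a2, a3, a4, a5, a6]
  simp only [j3_neg, j2_neg]
  ring

lemma QI2 (σ : ℂ) (hσ : 0 < σ.im) : QI (fun x => j2 x σ) 1 (fun x => j1 x σ) := by
  refine ⟨fun x => by simp [j2_neg], by norm_num, fun x => j1_neg x σ, fun η U A => ?_⟩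
  obtain ⟨e1, e2, e3⟩ := quad_aux σ hσ η U A
  obtain ⟨a1, a2, a3, a4, a5, a6⟩ := arg_aux η U A
  simp only []
  rw [mul_assoc _ (j1 _ _), mul_assoc _ (j1 _ _), mul_assoc _ (j1 _ _), e1, e2, e3, p22 _ _ _ hσ,
    p22 _ _ _ hσ, p22 _ _ _ hσ, a1, a2, a3, a4, a5, a6]
  simp only [j3_neg, j2_neg]
  ring

lemma QI0 (σ : ℂ) (hσ : 0 < σ.im) : QI (fun x => j0 x σ) 1 (fun x => j1 x σ) := by
  refine ⟨fun x => by simp [j0_neg], by norm_num, fun x => j1_neg x σ, fun η U A => ?_⟩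
  obtain ⟨e1, e2, e3⟩ := quad_aux σ hσ η U A
  obtain ⟨a1, a2, a3, a4, a5, a6⟩ := arg_aux η U A
  simp only []
  rw [mul_assoc _ (j1 _ _), mul_assoc _ (j1 _ _), mul_assoc _ (j1 _ _), e1, e2, e3, p00 _ _ _ hσ,
    p00 _ _ _ hσ, p00 _ _ _ hσ, a1, a2, a3, a4, a5, a6]
  simp only [j3_neg, j2_neg]
  ring

lemma QI1 (σ : ℂ) (hσ : 0 < σ.im) : QI (fun x => j1 x σ) (-1) (fun x => j1 x σ) := by
  refine ⟨fun x => by simp [j1_neg], by norm_num, fun x => j1_neg x σ, fun η U A => ?_⟩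
  obtain ⟨e1, e2, e3⟩ := quad_aux σ hσ η U A
  obtain ⟨a1, a2, a3, a4, a5, a6⟩ := arg_aux η U A
  simp only []
  rw [mul_assoc _ (j1 (2 * A) _), mul_assoc _ (j1 (2 * A + 2 * U) _), mul_assoc _ (j1 (2 * U) _),
    e1, e2, e3, p11 (η - U) _ _ hσ,
    p11 (η + U) _ _ hσ, p11 (η + U) _ _ hσ, a1, a2, a3, a4, a5, a6]
  simp only [j3_neg, j2_neg]
  ring

lemma core (σ : ℂ) (hσ : 0 < σ.im) (a b c d X Y X1 Y1 X2 Y2 S D S1 D1 S2 D2 α β1 β2 : ℂ)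
    (hS : X + Y = S) (hD : X - Y = D) (hS1 : X1 + Y1 = S1) (hD1 : X1 - Y1 = D1)
    (hS2 : X2 + Y2 = S2) (hD2 : X2 - Y2 = D2)
    (H3 : (a + d) * (j3 S (2 * σ) * j3 D (2 * σ)) * α =
      β1 * (j3 S1 (2 * σ) * j3 D1 (2 * σ)) + β2 * (j3 S2 (2 * σ) * j3 D2 (2 * σ)))
    (H2 : (a - d) * (j2 S (2 * σ) * j2 D (2 * σ)) * α =
      β1 * (j2 S1 (2 * σ) * j2 D1 (2 * σ)) + β2 * (j2 S2 (2 * σ) * j2 D2 (2 * σ)))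
    (H0 : (b + c) * (j0 S (2 * σ) * j0 D (2 * σ)) * α =
      β1 * (j0 S1 (2 * σ) * j0 D1 (2 * σ)) + β2 * (j0 S2 (2 * σ) * j0 D2 (2 * σ)))
    (H1 : (c - b) * (j1 S (2 * σ) * j1 D (2 * σ)) * α =
      β1 * (j1 S1 (2 * σ) * j1 D1 (2 * σ)) + β2 * (j1 S2 (2 * σ) * j1 D2 (2 * σ))) :
    (α * (a * (j3 X σ * j3 Y σ) + d * (j0 X σ * j0 Y σ)) =
      β1 * (j3 X1 σ * j3 Y1 σ) + β2 * (j3 X2 σ * j3 Y2 σ)) ∧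
    (α * (a * (j0 X σ * j0 Y σ) + d * (j3 X σ * j3 Y σ)) =
      β1 * (j0 X1 σ * j0 Y1 σ) + β2 * (j0 X2 σ * j0 Y2 σ)) ∧
    (α * (b * (j3 X σ * j0 Y σ) + c * (j0 X σ * j3 Y σ)) =
      β1 * (j0 X1 σ * j3 Y1 σ) + β2 * (j0 X2 σ * j3 Y2 σ)) ∧
    (α * (b * (j0 X σ * j3 Y σ) + c * (j3 X σ * j0 Y σ)) =
      β1 * (j3 X1 σ * j0 Y1 σ) + β2 * (j3 X2 σ * j0 Y2 σ)) := by
  simp only [p33 _ _ σ hσ, p00 _ _ σ hσ, p30 _ _ σ hσ, p03 _ _ σ hσ, hS, hD, hS1, hD1, hS2, hD2]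
  refine ⟨?_, ?_, ?_, ?_⟩
  · linear_combination H3 + H2
  · linear_combination H3 - H2
  · linear_combination H0 + H1
  · linear_combination H0 - H1

lemma H_same {g t : ℂ → ℂ} {ε : ℂ} (h : QI g ε t) (S D Z s : ℂ) (hs : s = 1 ∨ s = -1)
    (h0 : g S ≠ 0) :
    g D / g S * (g Z * g (s * S)) * 1 = 1 * (g Z * g (s * D)) + 0 * (g 0 * g 0) := by
  rcases hs with rfl | rfl
  · field_simp; simp
  · rw [neg_one_mul, neg_one_mul, h.1, h.1]; field_simp; simp

lemma H_down {g t : ℂ → ℂ} {ε K : ℂ} (h : QI g ε t) (η U A M bm bp b0 bd b1 bS bpd : ℂ)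
    (h0 : g (η + U) ≠ 0) (hbm : bm = K * t (2 * A - 2 * η))
    (hb0 : b0 = K * t (2 * A)) (hbd : bd = K * t (2 * U)) (hb1 : b1 = K * t (2 * η))
    (hbS : bS = K * t (2 * η + 2 * U)) (hbpd : bpd = K * t (2 * A + 2 * U))
    (n1 : bm ≠ 0) (n2 : bp ≠ 0) (n3 : b0 ≠ 0) (n4 : bS ≠ 0) :
    g (η - U) / g (η + U) * (g (2 * A - η + U) * g M) * (1 / bm) =
      bpd * b1 / (b0 * bS) / bm * (g (2 * A - η - U) * g M) +
      bp * bd / (b0 * bS) / bp * (g (2 * A + η + U) * g (-M)) := by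
  have hq := h.2.2.2 η U A
  have hq' : g (η - U) * g (2 * A - η + U) * b0 * bS =
      g (η + U) * g (2 * A - η - U) * bpd * b1 +
      ε * (g (η + U) * g (2 * A + η + U) * bd * bm) := by
    rw [hb0, hbS, hbpd, hb1, hbd, hbm]
    linear_combination K ^ 2 * hq
  rw [h.1 M]
  field_simp
  linear_combination g M * hq'

lemma H_up {g t : ℂ → ℂ} {ε K : ℂ} (h : QI g ε t) (η U A M bm bp b0 bd b1 bS bmd : ℂ)
    (h0 : g (η + U) ≠ 0) (hbp : bp = K * t (2 * A + 2 * η))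
    (hb0 : b0 = K * t (2 * A)) (hbd : bd = K * t (2 * U)) (hb1 : b1 = K * t (2 * η))
    (hbS : bS = K * t (2 * η + 2 * U)) (hbmd : bmd = K * t (2 * A - 2 * U))
    (n1 : bm ≠ 0) (n2 : bp ≠ 0) (n3 : b0 ≠ 0) (n4 : bS ≠ 0) :
    g (η - U) / g (η + U) * (g (2 * A + η - U) * g (-M)) * (1 / bp) =
      bm * bd / (b0 * bS) / bm * (g (2 * A - η - U) * g M) +
      bmd * b1 / (b0 * bS) / bp * (g (2 * A + η + U) * g (-M)) := by
  have hq := h.2.2.2 η U (-A)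
  have hε := h.2.1
  rw [show 2 * -A - η + U = -(2 * A + η - U) by ring, show 2 * -A - η - U = -(2 * A + η + U) by ring,
    show 2 * -A + η + U = -(2 * A - η - U) by ring, show 2 * -A - 2 * η = -(2 * A + 2 * η) by ring,
    show 2 * -A + 2 * U = -(2 * A - 2 * U) by ring, show 2 * -A = -(2 * A) by ring,
    h.1, h.1, h.1, h.2.2.1, h.2.2.1, h.2.2.1] at hq
  have hq' : ε * (g (η - U) * g (2 * A + η - U) * b0 * bS) =
      ε * (g (η + U) * g (2 * A + η + U) * bmd * b1) +
      (g (η + U) * g (2 * A - η - U) * bd * bp) := by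
    rw [hb0, hbS, hbmd, hb1, hbd, hbp]
    linear_combination -K ^ 2 * hq + K ^ 2 * (g (η + U) * g (2 * A - η - U) * t (2 * U) * t (2 * A + 2 * η)) * hε
  rw [h.1 M]
  field_simp
  linear_combination g M * hq'

lemma th_eqs (σ κ : ℂ) (h : ∀ v, th1 v σ = κ * j1 v σ) (v : ℂ) :
    th0 v σ = κ * j0 v σ ∧ th2 v σ = κ * j2 v σ ∧ th3 v σ = κ * j3 v σ := by
  have key : ∀ v, j1 (v + σ / 2) σ = I * cexp (-(Real.pi * I * (v + σ / 4))) * j0 v σ := by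
    intro v
    rw [j1, show v + σ / 2 + 1 / 2 + σ / 2 = (v + 1 / 2) + σ by ring, jacobiTheta₂_add_left', j0,
      show cexp (-(Real.pi * I * (v + σ / 4))) =
        -(cexp (Real.pi * I * (v + σ / 2 + σ / 4)) * cexp (-Real.pi * I * (σ + 2 * (v + 1 / 2)))) by
        rw [← Complex.exp_add, ← neg_one_mul (cexp _), ← Complex.exp_pi_mul_I, ← Complex.exp_add]
        ring_nf]
    ring
  refine ⟨?_, ?_, ?_⟩
  · rw [th0, h, key, Complex.exp_neg]
    have := Complex.exp_ne_zero (Real.pi * I * (v + σ / 4))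
    field_simp
    linear_combination (-κ * j0 v σ) * Complex.I_sq
  · rw [th2, h, j1_half]
  · rw [th3, h, show v + (σ + 1) / 2 = v + 1 / 2 + σ / 2 by ring, key, j0_half,
      show -(Real.pi * I * (v + 1 / 2 + σ / 4)) = -(Real.pi * I * (v + σ / 4)) +
        (-(Real.pi * I * (1 / 2))) by ring, Complex.exp_add, Complex.exp_neg, Complex.exp_neg,
        exp_half]
    have := Complex.exp_ne_zero (Real.pi * I * (v + σ / 4))
    field_simp

lemma weights (σ κ : ℂ) (hσ : 0 < σ.im) (r : ℝ) (h : ∀ v, th1 v σ = κ * j1 v σ) (w η U : ℂ)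
    (hη : η = 1 / (2 * r)) (hU : U = w / (2 * r))
    (h1 : th2 0 σ ≠ 0)
    (h2 : th1 ((1 + w) / (2 * (r : ℂ))) σ ≠ 0)
    (h3 : th2 ((1 + w) / (2 * (r : ℂ))) σ ≠ 0) :
    (j0 (η + U) (2 * σ) ≠ 0 ∧ j1 (η + U) (2 * σ) ≠ 0 ∧ j2 (η + U) (2 * σ) ≠ 0 ∧
      j3 (η + U) (2 * σ) ≠ 0) ∧
    aw (2 * σ) r w + dw (2 * σ) r w = j3 (η - U) (2 * σ) / j3 (η + U) (2 * σ) ∧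
    aw (2 * σ) r w - dw (2 * σ) r w = j2 (η - U) (2 * σ) / j2 (η + U) (2 * σ) ∧
    bw (2 * σ) r w + cw (2 * σ) r w = j0 (η - U) (2 * σ) / j0 (η + U) (2 * σ) ∧
    cw (2 * σ) r w - bw (2 * σ) r w = j1 (η - U) (2 * σ) / j1 (η + U) (2 * σ) := by
  have e2 : ∀ v, th2 v σ = κ * j2 v σ := fun v => (th_eqs σ κ h v).2.1
  have eS : (1 + w) / (2 * (r : ℂ)) = η + U := by rw [hη, hU]; ring
  unfold aw bw cw dw
  rw [show 2 * σ / 2 = σ by ring, eS, ← hη, ← hU]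
  rw [eS] at h2 h3
  simp only [e2, h] at h1 h2 h3 ⊢
  have q22 := p22 0 (η + U) σ hσ
  have q21 := p21 0 (η + U) σ hσ
  rw [zero_add, zero_sub, j2_neg, j3_neg] at q22
  rw [zero_add, zero_sub, j0_neg, j1_neg] at q21
  have r22 := p22 η U σ hσ
  have r11 := p11 η U σ hσ
  have r21 := p21 η U σ hσ
  have r12 := p12 η U σ hσ
  have hκ : κ ≠ 0 := left_ne_zero_of_mul h1
  have m1 := right_ne_zero_of_mul h1
  have m2 := right_ne_zero_of_mul h2
  have m3 := right_ne_zero_of_mul h3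
  have n22 := mul_ne_zero m1 m3
  have n21 := mul_ne_zero m1 m2
  rw [q22] at n22
  rw [q21] at n21
  have z0 : j0 (η + U) (2 * σ) ≠ 0 := by intro hz; apply n21; rw [hz]; ring
  have z1 : j1 (η + U) (2 * σ) ≠ 0 := by intro hz; apply n21; rw [hz]; ring
  have z2 : j2 (η + U) (2 * σ) ≠ 0 := by intro hz; apply n22; rw [hz]; ring
  have z3 : j3 (η + U) (2 * σ) ≠ 0 := by intro hz; apply n22; rw [hz]; ring
  refine ⟨⟨z0, z1, z2, z3⟩, ?_⟩
  have c1 : ∀ x y z w : ℂ, κ * x * (κ * y) / (κ * z * (κ * w)) = x * y / (z * w) := by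
    intro x y z w
    rw [show κ * x * (κ * y) = κ ^ 2 * (x * y) by ring,
      show κ * z * (κ * w) = κ ^ 2 * (z * w) by ring, mul_div_mul_left _ _ (pow_ne_zero 2 hκ)]
  simp only [neg_div, c1]
  rw [q22, q21, r22, r11, r21, r12]
  rw [show j1 (η + U) (2 * σ) * j0 (η + U) (2 * σ) - j0 (η + U) (2 * σ) * -j1 (η + U) (2 * σ)
    = 2 * (j0 (η + U) (2 * σ) * j1 (η + U) (2 * σ)) by ring,
    show j2 (η + U) (2 * σ) * j3 (η + U) (2 * σ) + j3 (η + U) (2 * σ) * j2 (η + U) (2 * σ)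
    = 2 * (j2 (η + U) (2 * σ) * j3 (η + U) (2 * σ)) by ring]
  refine ⟨?_, ?_, ?_, ?_⟩ <;> field_simp <;> ring

lemma sumR (τ : ℂ) (r : ℝ) (w : ℂ) (f g : ℤ → ℂ) :
    (∑ e1' ∈ ({1, -1} : Finset ℤ), ∑ e2' ∈ ({1, -1} : Finset ℤ),
        Rbar τ r w e1' e2' 1 1 * f e1' * g e2' =
      aw τ r w * (f 1 * g 1) + dw τ r w * (f (-1) * g (-1))) ∧
    (∑ e1' ∈ ({1, -1} : Finset ℤ), ∑ e2' ∈ ({1, -1} : Finset ℤ),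
        Rbar τ r w e1' e2' (-1) (-1) * f e1' * g e2' =
      aw τ r w * (f (-1) * g (-1)) + dw τ r w * (f 1 * g 1)) ∧
    (∑ e1' ∈ ({1, -1} : Finset ℤ), ∑ e2' ∈ ({1, -1} : Finset ℤ),
        Rbar τ r w e1' e2' 1 (-1) * f e1' * g e2' =
      bw τ r w * (f 1 * g (-1)) + cw τ r w * (f (-1) * g 1)) ∧
    (∑ e1' ∈ ({1, -1} : Finset ℤ), ∑ e2' ∈ ({1, -1} : Finset ℤ),
        Rbar τ r w e1' e2' (-1) 1 * f e1' * g e2' =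
      bw τ r w * (f (-1) * g 1) + cw τ r w * (f 1 * g (-1))) := by
  have hne : (1 : ℤ) ≠ -1 := by decide
  refine ⟨?_, ?_, ?_, ?_⟩ <;> simp [Rbar, Finset.sum_pair hne] <;> ring

lemma psiStar_p (σ κ : ℂ) (h : ∀ v, th1 v σ = κ * j1 v σ) (r : ℝ) (u : ℂ) (a b : ℤ) :
    psiStar (2 * σ) r u 1 a b = -((a : ℂ) - b) * (Cc (2 * σ) r ^ 2 * κ / 2) *
      j3 ((((a : ℂ) - b) * (u - 1) + a) / (2 * r)) σ / (br (2 * σ) r b * br (2 * σ) r u) := by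
  rw [psiStar, psi, if_neg (by decide), show 2 * σ / 2 = σ by ring, (th_eqs σ κ h _).2.2]
  push_cast
  ring

lemma psiStar_m (σ κ : ℂ) (h : ∀ v, th1 v σ = κ * j1 v σ) (r : ℝ) (u : ℂ) (a b : ℤ) :
    psiStar (2 * σ) r u (-1) a b = ((a : ℂ) - b) * (Cc (2 * σ) r ^ 2 * κ / 2) *
      j0 ((((a : ℂ) - b) * (u - 1) + a) / (2 * r)) σ / (br (2 * σ) r b * br (2 * σ) r u) := by
  rw [psiStar, psi, if_pos (by decide), show 2 * σ / 2 = σ by ring, (th_eqs σ κ h _).1]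
  push_cast
  ring

lemma case_same (σ κ : ℂ) (hσ : 0 < σ.im) (r : ℝ) (hr : 0 < r)
    (h : ∀ v, th1 v σ = κ * j1 v σ)
    (u v : ℂ) (e1 e2 : ℤ) (he1 : e1 = 1 ∨ e1 = -1) (he2 : e2 = 1 ∨ e2 = -1)
    (a s : ℤ) (hs : s = 1 ∨ s = -1)
    (h1 : th2 0 σ ≠ 0)
    (h2 : th1 ((1 + (u - v)) / (2 * (r : ℂ))) σ ≠ 0)
    (h3 : th2 ((1 + (u - v)) / (2 * (r : ℂ))) σ ≠ 0) :
    ∑ e1' ∈ ({1, -1} : Finset ℤ), ∑ e2' ∈ ({1, -1} : Finset ℤ),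
        Rbar (2 * σ) r (u - v) e1' e2' e1 e2 * psiStar (2 * σ) r u e1' a (a - s) *
          psiStar (2 * σ) r v e2' (a - s) (a - s - s) =
        psiStar (2 * σ) r v e2 a (a - s) * psiStar (2 * σ) r u e1 (a - s) (a - s - s) := by
  have hrc : (r : ℂ) ≠ 0 := by exact_mod_cast hr.ne'
  have hσ2 : 0 < (2 * σ).im := by simpa using hσ
  have hsc : (s : ℂ) = 1 ∨ (s : ℂ) = -1 := by
    rcases hs with rfl | rfl <;> simp
  obtain ⟨⟨z0, z1, z2, z3⟩, w3, w2, w0, w1⟩ := weights σ κ hσ r h (u - v) _ _ rfl rfl h1 h2 h3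
  set η : ℂ := 1 / (2 * r) with hη
  set U : ℂ := (u - v) / (2 * r) with hU
  set Z : ℂ := ((s : ℂ) * (u - 1) + a) / (2 * r) + ((s : ℂ) * (v - 1) + (a - s)) / (2 * r) with hZ
  obtain ⟨q1, q2, q3, q4⟩ := core σ hσ (aw (2 * σ) r (u - v)) (bw (2 * σ) r (u - v))
    (cw (2 * σ) r (u - v)) (dw (2 * σ) r (u - v))
    (((s : ℂ) * (u - 1) + a) / (2 * r)) (((s : ℂ) * (v - 1) + (a - s)) / (2 * r))
    (((s : ℂ) * (v - 1) + a) / (2 * r)) (((s : ℂ) * (u - 1) + (a - s)) / (2 * r)) 0 0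
    Z (s * (η + U)) Z (s * (η - U)) 0 0 1 1 0 hZ.symm
    (by rw [hη, hU]; field_simp; ring) (by rw [hZ]; ring) (by rw [hη, hU]; field_simp; ring)
    (by ring) (by ring)
    (by rw [w3]; exact H_same (QI3 _ hσ2) _ _ _ _ hsc z3)
    (by rw [w2]; exact H_same (QI2 _ hσ2) _ _ _ _ hsc z2)
    (by rw [w0]; exact H_same (QI0 _ hσ2) _ _ _ _ hsc z0)
    (by rw [w1]; exact H_same (QI1 _ hσ2) _ _ _ _ hsc z1)
  obtain ⟨s1, s2, s3, s4⟩ := sumR (2 * σ) r (u - v) (fun e => psiStar (2 * σ) r u e a (a - s))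
    (fun e => psiStar (2 * σ) r v e (a - s) (a - s - s))
  have d1 : ((a : ℂ) - (a - s)) = s := by ring
  have d2 : ((a : ℂ) - s - (a - s - s)) = s := by ring
  rcases he1 with rfl | rfl <;> rcases he2 with rfl | rfl
  · rw [s1]
    simp only [psiStar_p σ κ h, psiStar_m σ κ h]
    push_cast
    rw [d1, d2]
    linear_combination ((s : ℂ) ^ 2 * (Cc (2 * σ) r ^ 2 * κ / 2) ^ 2 / (br (2 * σ) r (a - s) *
      br (2 * σ) r u * br (2 * σ) r (a - s - s) * br (2 * σ) r v)) * q1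
  · rw [s3]
    simp only [psiStar_p σ κ h, psiStar_m σ κ h]
    push_cast
    rw [d1, d2]
    linear_combination (-(s : ℂ) ^ 2 * (Cc (2 * σ) r ^ 2 * κ / 2) ^ 2 / (br (2 * σ) r (a - s) *
      br (2 * σ) r u * br (2 * σ) r (a - s - s) * br (2 * σ) r v)) * q3
  · rw [s4]
    simp only [psiStar_p σ κ h, psiStar_m σ κ h]
    push_cast
    rw [d1, d2]
    linear_combination (-(s : ℂ) ^ 2 * (Cc (2 * σ) r ^ 2 * κ / 2) ^ 2 / (br (2 * σ) r (a - s) *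
      br (2 * σ) r u * br (2 * σ) r (a - s - s) * br (2 * σ) r v)) * q4
  · rw [s2]
    simp only [psiStar_p σ κ h, psiStar_m σ κ h]
    push_cast
    rw [d1, d2]
    linear_combination ((s : ℂ) ^ 2 * (Cc (2 * σ) r ^ 2 * κ / 2) ^ 2 / (br (2 * σ) r (a - s) *
      br (2 * σ) r u * br (2 * σ) r (a - s - s) * br (2 * σ) r v)) * q2

set_option maxHeartbeats 1000000 in
lemma case_turn (σ κ K : ℂ) (hσ : 0 < σ.im) (r : ℝ) (hr : 0 < r)
    (h : ∀ v, th1 v σ = κ * j1 v σ) (hK : ∀ u, br (2 * σ) r u = K * j1 (u / r) (2 * σ))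
    (u v : ℂ) (e1 e2 : ℤ) (he1 : e1 = 1 ∨ e1 = -1) (he2 : e2 = 1 ∨ e2 = -1)
    (a s : ℤ) (hs : s = 1 ∨ s = -1)
    (h1 : th2 0 σ ≠ 0)
    (h2 : th1 ((1 + (u - v)) / (2 * (r : ℂ))) σ ≠ 0)
    (h3 : th2 ((1 + (u - v)) / (2 * (r : ℂ))) σ ≠ 0)
    (h7 : br (2 * σ) r (a : ℂ) ≠ 0)
    (h8 : br (2 * σ) r ((a : ℂ) - 1) ≠ 0) (h9 : br (2 * σ) r ((a : ℂ) + 1) ≠ 0)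
    (h10 : br (2 * σ) r (1 + (u - v)) ≠ 0) :
    ∑ e1' ∈ ({1, -1} : Finset ℤ), ∑ e2' ∈ ({1, -1} : Finset ℤ),
        Rbar (2 * σ) r (u - v) e1' e2' e1 e2 * psiStar (2 * σ) r u e1' a (a - s) *
          psiStar (2 * σ) r v e2' (a - s) a =
        psiStar (2 * σ) r v e2 a (a - 1) * psiStar (2 * σ) r u e1 (a - 1) a *
          Wb (2 * σ) r (u - v) a (a - 1) (a - s) a +
        psiStar (2 * σ) r v e2 a (a + 1) * psiStar (2 * σ) r u e1 (a + 1) a *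
          Wb (2 * σ) r (u - v) a (a + 1) (a - s) a := by
  have hrc : (r : ℂ) ≠ 0 := by exact_mod_cast hr.ne'
  have hσ2 : 0 < (2 * σ).im := by simpa using hσ
  obtain ⟨⟨z0, z1, z2, z3⟩, w3, w2, w0, w1⟩ := weights σ κ hσ r h (u - v) _ _ rfl rfl h1 h2 h3
  set η : ℂ := 1 / (2 * r) with hη
  set U : ℂ := (u - v) / (2 * r) with hU
  set A : ℂ := a / (2 * r) with hA
  set M : ℂ := (u + v - 1) / (2 * r) with hM
  have kbm : br (2 * σ) r ((a : ℂ) - 1) = K * j1 (2 * A - 2 * η) (2 * σ) := by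
    rw [hK]; congr 2; rw [hA, hη]; field_simp
  have kbp : br (2 * σ) r ((a : ℂ) + 1) = K * j1 (2 * A + 2 * η) (2 * σ) := by
    rw [hK]; congr 2; rw [hA, hη]; field_simp
  have kb0 : br (2 * σ) r (a : ℂ) = K * j1 (2 * A) (2 * σ) := by
    rw [hK]; congr 2; rw [hA]; field_simp
  have kbd : br (2 * σ) r (u - v) = K * j1 (2 * U) (2 * σ) := by
    rw [hK]; congr 2; rw [hU]; field_simp
  have kb1 : br (2 * σ) r 1 = K * j1 (2 * η) (2 * σ) := by
    rw [hK]; congr 2; rw [hη]; field_simp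
  have kbS : br (2 * σ) r (1 + (u - v)) = K * j1 (2 * η + 2 * U) (2 * σ) := by
    rw [hK]; congr 2; rw [hU, hη]; field_simp
  have kbpd : br (2 * σ) r (a + (u - v)) = K * j1 (2 * A + 2 * U) (2 * σ) := by
    rw [hK]; congr 2; rw [hA, hU]; field_simp
  have kbmd : br (2 * σ) r (a - (u - v)) = K * j1 (2 * A - 2 * U) (2 * σ) := by
    rw [hK]; congr 2; rw [hA, hU]; field_simp
  have key : ∃ α β1 β2 : ℂ, α = 1 / br (2 * σ) r (a - s) ∧
      β1 = Wb (2 * σ) r (u - v) a (a - 1) (a - s) a / br (2 * σ) r (a - 1) ∧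
      β2 = Wb (2 * σ) r (u - v) a (a + 1) (a - s) a / br (2 * σ) r (a + 1) ∧
      ∀ (g : ℂ → ℂ) (ε : ℂ), QI g ε (fun x => j1 x (2 * σ)) → g (η + U) ≠ 0 →
        g (η - U) / g (η + U) * (g (2 * A - s * (η - U)) * g (s * M)) * α =
          β1 * (g (2 * A - η - U) * g M) + β2 * (g (2 * A + η + U) * g (-M)) := by
    refine ⟨_, _, _, rfl, rfl, rfl, ?_⟩
    intro g ε hg hg0
    rcases hs with rfl | rfl
    · have W1 : Wb (2 * σ) r (u - v) a (a - 1) (a - 1) a =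
        br (2 * σ) r (a + (u - v)) * br (2 * σ) r 1 /
          (br (2 * σ) r a * br (2 * σ) r (1 + (u - v))) := by
        unfold Wb
        rw [if_neg (by omega), if_neg (by omega), if_neg (by omega), if_pos (by omega)]
      have W2 : Wb (2 * σ) r (u - v) a (a + 1) (a - 1) a =
        br (2 * σ) r (a + 1) * br (2 * σ) r (u - v) /
          (br (2 * σ) r a * br (2 * σ) r (1 + (u - v))) := by
        unfold Wb
        rw [if_neg (by omega), if_neg (by omega), if_neg (by omega), if_neg (by omega),
          if_pos (by omega)]
      rw [W1, W2]
      have := H_down hg η U A M _ _ _ _ _ _ _ hg0 kbm kb0 kbd kb1 kbS kbpd h8 h9 h7 h10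
      push_cast
      rw [one_mul, one_mul, show 2 * A - (η - U) = 2 * A - η + U by ring]
      exact this
    · have W1 : Wb (2 * σ) r (u - v) a (a - 1) (a - -1) a =
        br (2 * σ) r (a - 1) * br (2 * σ) r (u - v) /
          (br (2 * σ) r a * br (2 * σ) r (1 + (u - v))) := by
        unfold Wb
        rw [if_neg (by omega), if_neg (by omega), if_neg (by omega), if_neg (by omega),
          if_neg (by omega), if_pos (by omega)]
      have W2 : Wb (2 * σ) r (u - v) a (a + 1) (a - -1) a =
        br (2 * σ) r (a - (u - v)) * br (2 * σ) r 1 /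
          (br (2 * σ) r a * br (2 * σ) r (1 + (u - v))) := by
        unfold Wb
        rw [if_neg (by omega), if_neg (by omega), if_pos (by omega)]
      rw [W1, W2]
      have := H_up hg η U A M _ _ _ _ _ _ _ hg0 kbp kb0 kbd kb1 kbS kbmd h8 h9 h7 h10
      push_cast
      rw [neg_one_mul, neg_one_mul, show 2 * A - -(η - U) = 2 * A + η - U by ring,
        sub_neg_eq_add (a : ℂ)]
      exact this
  obtain ⟨α, β1, β2, hα, hβ1, hβ2, H⟩ := key
  have hs2 : (s : ℂ) * s = 1 := by
    rcases hs with rfl | rfl <;> simp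
  obtain ⟨q1, q2, q3, q4⟩ := core σ hσ (aw (2 * σ) r (u - v)) (bw (2 * σ) r (u - v))
    (cw (2 * σ) r (u - v)) (dw (2 * σ) r (u - v))
    (((s : ℂ) * (u - 1) + a) / (2 * r)) ((-(s : ℂ) * (v - 1) + (a - s)) / (2 * r))
    ((1 * (v - 1) + a) / (2 * r)) ((-1 * (u - 1) + (a - 1)) / (2 * r))
    ((-1 * (v - 1) + a) / (2 * r)) ((1 * (u - 1) + (a + 1)) / (2 * r))
    (2 * A - s * (η - U)) (s * M) (2 * A - η - U) M (2 * A + η + U) (-M) α β1 β2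
    (by rw [hη, hU, hA]; field_simp; ring) (by rw [hM]; field_simp; ring)
    (by rw [hη, hU, hA]; field_simp; ring) (by rw [hM]; field_simp; ring)
    (by rw [hη, hU, hA]; field_simp; ring) (by rw [hM]; field_simp; ring)
    (by rw [w3]; exact H (fun x => j3 x (2 * σ)) 1 (QI3 _ hσ2) z3)
    (by rw [w2]; exact H (fun x => j2 x (2 * σ)) 1 (QI2 _ hσ2) z2)
    (by rw [w0]; exact H (fun x => j0 x (2 * σ)) 1 (QI0 _ hσ2) z0)
    (by rw [w1]; exact H (fun x => j1 x (2 * σ)) (-1) (QI1 _ hσ2) z1)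
  obtain ⟨s1, s2, s3, s4⟩ := sumR (2 * σ) r (u - v) (fun e => psiStar (2 * σ) r u e a (a - s))
    (fun e => psiStar (2 * σ) r v e (a - s) a)
  rw [hα, hβ1, hβ2] at q1 q2 q3 q4
  generalize Wb (2 * σ) r (u - v) a (a - 1) (a - s) a = W1 at *
  generalize Wb (2 * σ) r (u - v) a (a + 1) (a - s) a = W2 at *
  have d1 : ((a : ℂ) - (a - s)) = s := by ring
  have d2 : ((a : ℂ) - s - a) = -s := by ring
  have d3 : ((a : ℂ) - (a - 1)) = 1 := by ring
  have d4 : ((a : ℂ) - 1 - a) = -1 := by ring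
  have d5 : ((a : ℂ) - (a + 1)) = -1 := by ring
  have d6 : ((a : ℂ) + 1 - a) = 1 := by ring
  have fin : ∀ P1 P2 x y x' y' x1 y1 x2 y2 k B1 Bp Bm B0 Bu Bv : ℂ,
      1 / B1 * (P1 * (x * y) + P2 * (x' * y')) =
        W1 / Bm * (x1 * y1) + W2 / Bp * (x2 * y2) →
      P1 * (s * k * x / (B1 * Bu) * (-s * k * y / (B0 * Bv))) +
      P2 * (s * k * x' / (B1 * Bu) * (-s * k * y' / (B0 * Bv))) =
      1 * k * x1 / (Bm * Bv) * (-1 * k * y1 / (B0 * Bu)) * W1 +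
      -1 * k * x2 / (Bp * Bv) * (1 * k * y2 / (B0 * Bu)) * W2 := by
    intro P1 P2 x y x' y' x1 y1 x2 y2 k B1 Bp Bm B0 Bu Bv hh
    linear_combination (-(k ^ 2) / (B0 * Bu * Bv)) * hh -
      k ^ 2 / (B0 * Bu * Bv) * (1 / B1 * (P1 * (x * y) + P2 * (x' * y'))) * hs2
  rcases he1 with rfl | rfl <;> rcases he2 with rfl | rfl
  · rw [s1]
    simp only [psiStar_p σ κ h, psiStar_m σ κ h]
    push_cast
    rw [d1, d2, d3, d4, d5, d6]
    linear_combination fin _ _ _ _ _ _ _ _ _ _ (Cc (2 * σ) r ^ 2 * κ / 2) _ _ _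
      (br (2 * σ) r a) (br (2 * σ) r u) (br (2 * σ) r v) q1
  · rw [s3]
    simp only [psiStar_p σ κ h, psiStar_m σ κ h]
    push_cast
    rw [d1, d2, d3, d4, d5, d6]
    linear_combination -fin _ _ _ _ _ _ _ _ _ _ (Cc (2 * σ) r ^ 2 * κ / 2) _ _ _
      (br (2 * σ) r a) (br (2 * σ) r u) (br (2 * σ) r v) q3
  · rw [s4]
    simp only [psiStar_p σ κ h, psiStar_m σ κ h]
    push_cast
    rw [d1, d2, d3, d4, d5, d6]
    linear_combination -fin _ _ _ _ _ _ _ _ _ _ (Cc (2 * σ) r ^ 2 * κ / 2) _ _ _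
      (br (2 * σ) r a) (br (2 * σ) r u) (br (2 * σ) r v) q4
  · rw [s2]
    simp only [psiStar_p σ κ h, psiStar_m σ κ h]
    push_cast
    rw [d1, d2, d3, d4, d5, d6]
    linear_combination fin _ _ _ _ _ _ _ _ _ _ (Cc (2 * σ) r ^ 2 * κ / 2) _ _ _
      (br (2 * σ) r a) (br (2 * σ) r u) (br (2 * σ) r v) q2


/-- Dual vertex-face correspondence. -/
theorem dual_vertex_face_correspondence (τ : ℂ) (r : ℝ) (hτ : 0 < τ.im) (hr : 0 < r)
    (u v : ℂ) (e1 e2 : ℤ) (he1 : e1 = 1 ∨ e1 = -1) (he2 : e2 = 1 ∨ e2 = -1)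
    (a b c : ℤ) (hab : |a - b| = 1) (hbc : |b - c| = 1)
    (h1 : th2 0 (τ / 2) ≠ 0)
    (h2 : th1 ((1 + (u - v)) / (2 * (r : ℂ))) (τ / 2) ≠ 0)
    (h3 : th2 ((1 + (u - v)) / (2 * (r : ℂ))) (τ / 2) ≠ 0)
    (h4 : br τ r u ≠ 0) (h5 : br τ r v ≠ 0)
    (h6 : br τ r (b : ℂ) ≠ 0) (h7 : br τ r (c : ℂ) ≠ 0)
    (h8 : br τ r ((a : ℂ) - 1) ≠ 0) (h9 : br τ r ((a : ℂ) + 1) ≠ 0)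
    (h10 : br τ r (1 + (u - v)) ≠ 0) :
    ∑ e1' ∈ ({1, -1} : Finset ℤ), ∑ e2' ∈ ({1, -1} : Finset ℤ),
        Rbar τ r (u - v) e1' e2' e1 e2 * psiStar τ r u e1' a b * psiStar τ r v e2' b c =
      ∑ b' ∈ ({a - 1, a + 1} : Finset ℤ).filter fun b' => |b' - c| = 1,
        psiStar τ r v e2 a b' * psiStar τ r u e1 b' c * Wb τ r (u - v) c b' b a := by
  obtain ⟨σ, rfl⟩ : ∃ σ, τ = 2 * σ := ⟨τ / 2, by ring⟩
  rw [show 2 * σ / 2 = σ by ring] at h1 h2 h3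
  have hσ : 0 < σ.im := by simpa using hτ
  obtain ⟨κ, hκ⟩ := th1_eq σ hσ
  obtain ⟨K, hK⟩ := br_eq (2 * σ) r hτ hr
  obtain ⟨s, hs, rfl⟩ : ∃ s : ℤ, (s = 1 ∨ s = -1) ∧ b = a - s :=
    ⟨a - b, eq_or_eq_neg_of_abs_eq hab, by ring⟩
  have hc : c = a - s - s ∨ c = a := by
    rcases eq_or_eq_neg_of_abs_eq hbc with h | h <;> rcases hs with rfl | rfl <;> omega
  rcases hc with rfl | rfl
  · have hf : ({a - 1, a + 1} : Finset ℤ).filter (fun b' => |b' - (a - s - s)| = 1) = {a - s} := by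
      ext x
      simp only [Finset.mem_filter, Finset.mem_insert, Finset.mem_singleton, abs_eq zero_le_one]
      omega
    rw [hf, Finset.sum_singleton, case_same σ κ hσ r hr hκ u v e1 e2 he1 he2 a s hs h1 h2 h3]
    have : Wb (2 * σ) r (u - v) (a - s - s) (a - s) (a - s) a = 1 := by
      unfold Wb
      rcases hs with rfl | rfl
      · rw [if_pos (by omega)]
      · rw [if_neg (by omega), if_pos (by omega)]
    rw [this, mul_one]
  · have hf : ({c - 1, c + 1} : Finset ℤ).filter (fun b' => |b' - c| = 1) = {c - 1, c + 1} := by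
      ext x
      simp only [Finset.mem_filter, Finset.mem_insert, Finset.mem_singleton, abs_eq zero_le_one]
      omega
    rw [hf, Finset.sum_pair (show c - 1 ≠ c + 1 by omega)]
    exact case_turn σ κ K hσ r hr hκ hK u v e1 e2 he1 he2 c s hs h1 h2 h3 h7 h8 h9 h10

end Ell
end
end

section
/- First inversion relation for intertwining vectors: for all a, b, c ∈ ℤ with |a−b| = |b−c| = 1 and all u ∈ ℂ with [u] ≠ 0 and [b] ≠ 0, one has Σ_{ε ∈ {+1,−1}} ψ*_ε(u)^a_b · ψ_ε(u)^b_c = 1 if a = c, and = 0 if a ≠ c. -/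
noncomputable section

open Complex Finset

namespace Ell

/-- finite q-Pochhammer -/
def qP (p : ℂ) (k : ℕ) : ℂ := ∏ j ∈ Finset.range k, (1 - p ^ (j + 1))

/-- q-binomial by Pascal recursion -/
def qb (p : ℂ) : ℕ → ℕ → ℂ
  | _, 0 => 1
  | 0, _ + 1 => 0
  | M + 1, k + 1 => qb p M (k + 1) + p ^ (M - k) * qb p M k

lemma qb_zero_of_lt (p : ℂ) : ∀ (M k : ℕ), M < k → qb p M k = 0
  | _, 0, h => by omega
  | 0, k + 1, _ => by simp [qb]
  | M + 1, k + 1, h => by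
    rw [qb, qb_zero_of_lt p M (k + 1) (by omega), qb_zero_of_lt p M k (by omega)]; simp

lemma qP_succ (p : ℂ) (k : ℕ) : qP p (k + 1) = qP p k * (1 - p ^ (k + 1)) := by
  simp [qP, Finset.prod_range_succ]

lemma qb_mul (p : ℂ) : ∀ (k m : ℕ), qb p (m + k) k * (qP p k * qP p m) = qP p (m + k)
  | 0, m => by simp [qb, qP]
  | k + 1, 0 => by
    have h := qb_mul p k 0
    simp only [zero_add] at h ⊢
    rw [qb, qb_zero_of_lt p k (k + 1) (by omega), qP_succ]
    simp only [Nat.sub_self, pow_zero]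
    linear_combination (1 - p ^ (k + 1)) * h
  | k + 1, m + 1 => by
    have h1 := qb_mul p (k + 1) m
    have h2 := qb_mul p k (m + 1)
    rw [show m + 1 + (k + 1) = (m + k + 1) + 1 by ring, qb, qP_succ p (m + k + 1)]
    rw [show m + (k + 1) = m + k + 1 by ring] at h1
    rw [show m + 1 + k = m + k + 1 by ring] at h2
    rw [show m + k + 1 - k = m + 1 by omega]
    rw [qP_succ p m] at h2 ⊢
    rw [qP_succ p k] at h1 ⊢
    have e : p ^ (m + k + 1 + 1) = p ^ (m + 1) * p ^ (k + 1) := by ring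
    rw [e]
    linear_combination (1 - p ^ (m + 1)) * h1 + p ^ (m + 1) * (1 - p ^ (k + 1)) * h2
  termination_by k m => k + m

lemma qbinom (p y : ℂ) (g : ℕ → ℂ) (hg0 : g 0 = 1)
    (hg : ∀ k, g (k + 1) = g k * (y * p ^ k)) (M : ℕ) :
    ∏ j ∈ Finset.range M, (1 + y * p ^ j) = ∑ k ∈ Finset.range (M + 1), qb p M k * g k := by
  induction M with
  | zero => simp [qb, hg0]
  | succ M ih =>
    rw [Finset.prod_range_succ, ih, Finset.sum_range_succ' _ (M + 1)]
    have h1 : ∀ k ∈ Finset.range (M + 1), qb p (M + 1) (k + 1) * g (k + 1)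
        = qb p M (k + 1) * g (k + 1) + y * p ^ M * (qb p M k * g k) := by
      intro k hk
      have : k ≤ M := by simp at hk; omega
      rw [qb, add_mul, hg k]
      have e : p ^ M = p ^ (M - k) * p ^ k := by rw [← pow_add]; congr 1; omega
      rw [e]; ring
    rw [Finset.sum_congr rfl h1, Finset.sum_add_distrib, ← Finset.mul_sum]
    have h2 := Finset.sum_range_succ' (fun k => qb p M k * g k) (M + 1)
    rw [Finset.sum_range_succ] at h2
    rw [qb_zero_of_lt p M (M + 1) (by omega)] at h2
    have e1 : qb p (M + 1) 0 = 1 := by simp [qb]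
    have e2 : qb p M 0 = 1 := by cases M <;> simp [qb]
    rw [e2] at h2
    rw [e1]
    linear_combination h2

/-- finite form -/
lemma finite_jtp (p z : ℂ) (hp : p ≠ 0) (hz : z ≠ 0) (t : ℤ → ℂ) (ht0 : t 0 = 1)
    (ht : ∀ n, t (n + 1) = - z * p ^ n * t n) (N : ℕ) :
    ∏ j ∈ Finset.range N, ((1 - z * p ^ j) * (1 - p ^ (j + 1) / z))
      = ∑ k ∈ Finset.range (2 * N + 1), qb p (2 * N) k * t ((k : ℤ) - N) := by
  have hA : ∀ N : ℕ, t (-N) * ∏ j ∈ Finset.range N, (1 - z * p ^ (-((j : ℤ) + 1)))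
      = ∏ j ∈ Finset.range N, (1 - p ^ (j + 1) / z) := by
    intro N
    induction N with
    | zero => simp [ht0]
    | succ N ih =>
      rw [Finset.prod_range_succ, Finset.prod_range_succ, ← ih]
      have h := ht (-((N : ℤ) + 1))
      rw [show -((N : ℤ) + 1) + 1 = -N by ring] at h
      rw [h]
      push_cast
      have e : p ^ (-((N : ℤ) + 1)) = (p ^ (N + 1))⁻¹ := by
        rw [zpow_neg]; norm_cast
      rw [e]
      have : p ^ (N + 1) ≠ 0 := pow_ne_zero _ hp
      field_simp
      ring
  have hne : ∀ n : ℕ, t (-n) ≠ 0 := by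
    intro n
    induction n with
    | zero => simp [ht0]
    | succ n ih =>
      have h := ht (-((n : ℤ) + 1))
      rw [show -((n : ℤ) + 1) + 1 = -n by ring] at h
      intro h0
      push_cast at h0
      rw [h0, mul_zero] at h
      exact ih h
  have hq := qbinom p (-z * p ^ (-(N : ℤ))) (fun k => t ((k : ℤ) - N) / t (-N))
    (by simp [hne N]) (by
      intro k
      have h := ht ((k : ℤ) - N)
      push_cast
      rw [show (k : ℤ) + 1 - N = (k : ℤ) - N + 1 by ring, h, sub_eq_add_neg, zpow_add₀ hp]
      simp only [zpow_natCast]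
      ring) (2 * N)
  have hs : ∑ k ∈ Finset.range (2 * N + 1), qb p (2 * N) k * t ((k : ℤ) - N)
      = t (-N) * ∏ j ∈ Finset.range (2 * N), (1 + -z * p ^ (-(N : ℤ)) * p ^ j) := by
    rw [hq, Finset.mul_sum]
    refine Finset.sum_congr rfl fun k _ => ?_
    have := hne N
    field_simp
  rw [hs, two_mul, Finset.prod_range_add, Finset.prod_mul_distrib, ← hA N]
  rw [← Finset.prod_range_reflect (fun j => 1 + -z * p ^ (-(N : ℤ)) * p ^ j)]
  have h1 : ∏ j ∈ Finset.range N, (1 + -z * p ^ (-(N : ℤ)) * p ^ (N - 1 - j))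
      = ∏ j ∈ Finset.range N, (1 - z * p ^ (-((j : ℤ) + 1))) := by
    refine Finset.prod_congr rfl fun j hj => ?_
    have hj' : j < N := by simpa using hj
    rw [← zpow_natCast, mul_assoc, ← zpow_add₀ hp]
    rw [show -(N : ℤ) + ((N - 1 - j : ℕ) : ℤ) = -((j : ℤ) + 1) by omega]
    ring
  have h2 : ∏ j ∈ Finset.range N, (1 + -z * p ^ (-(N : ℤ)) * p ^ (N + j))
      = ∏ j ∈ Finset.range N, (1 - z * p ^ j) := by
    refine Finset.prod_congr rfl fun j hj => ?_
    rw [← zpow_natCast, mul_assoc, ← zpow_add₀ hp]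
    rw [show -(N : ℤ) + ((N + j : ℕ) : ℤ) = (j : ℤ) by omega, zpow_natCast]
    ring
  rw [h1, h2]
  ring

open Filter Topology in
lemma qP_tendsto (p : ℂ) (hp : ‖p‖ < 1) :
    ∃ φ : ℂ, φ ≠ 0 ∧ Tendsto (qP p) atTop (𝓝 φ) := by
  refine ⟨∏' n : ℕ, (1 + -p ^ (n + 1)), ?_, ?_⟩
  · refine tprod_one_add_ne_zero_of_summable ?_ ?_
    · intro i h
      have h1 : p ^ (i + 1) = 1 := by linear_combination -h
      have h2 : ‖p‖ ^ (i + 1) < 1 := pow_lt_one₀ (norm_nonneg _) hp (by omega)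
      rw [← norm_pow, h1] at h2
      simp at h2
    · simpa using (summable_nat_add_iff 1).mpr (summable_geometric_of_lt_one (norm_nonneg _) hp)
  · have hm : Multipliable fun n : ℕ => (1 + -p ^ (n + 1)) := by
      apply multipliable_one_add_of_summable
      simpa using (summable_nat_add_iff 1).mpr (summable_geometric_of_lt_one (norm_nonneg _) hp)
    have := hm.hasProd.tendsto_prod_nat
    have e : qP p = fun n => ∏ i ∈ Finset.range n, (1 + -p ^ (i + 1)) := by
      funext n; simp [qP, sub_eq_add_neg]
    rw [e]
    exact this

lemma qP_ne (p : ℂ) (hp : ‖p‖ < 1) (k : ℕ) : qP p k ≠ 0 := by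
  rw [qP, Finset.prod_ne_zero_iff]
  intro i _ h
  have h1 : p ^ (i + 1) = 1 := by linear_combination -h
  have h2 : ‖p‖ ^ (i + 1) < 1 := pow_lt_one₀ (norm_nonneg _) hp (by omega)
  rw [← norm_pow, h1] at h2
  simp at h2

open Filter Topology in
lemma jtp_tendsto (p z : ℂ) (hp : p ≠ 0) (hp1 : ‖p‖ < 1) (hz : z ≠ 0) (t : ℤ → ℂ) (ht0 : t 0 = 1)
    (ht : ∀ n, t (n + 1) = - z * p ^ n * t n) (hs : Summable fun n => ‖t n‖) :
    Tendsto (fun N => ∏ j ∈ Finset.range N,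
      ((1 - z * p ^ j) * (1 - p ^ (j + 1) / z) * (1 - p ^ (j + 1)))) atTop (𝓝 (∑' n, t n)) := by
  obtain ⟨φ, hφ, hlim⟩ := qP_tendsto p hp1
  have hinv : Tendsto (fun k => (qP p k)⁻¹) atTop (𝓝 φ⁻¹) := hlim.inv₀ hφ
  obtain ⟨A, hA⟩ := hlim.norm.bddAbove_range
  obtain ⟨B, hB⟩ := hinv.norm.bddAbove_range
  have hA' : ∀ k, ‖qP p k‖ ≤ A := fun k => hA ⟨k, rfl⟩
  have hB' : ∀ k, ‖(qP p k)⁻¹‖ ≤ B := fun k => hB ⟨k, rfl⟩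
  have hA0 : 0 ≤ A := (norm_nonneg _).trans (hA' 0)
  have hB0 : 0 ≤ B := (norm_nonneg _).trans (hB' 0)
  set F : ℕ → ℤ → ℂ := fun N n => if n ∈ Finset.Icc (-(N : ℤ)) N then
    qP p N * (qP p (2 * N) * (qP p (N + n).toNat)⁻¹ * (qP p (N - n).toNat)⁻¹) * t n else 0 with hF
  have key : ∀ N, ∏ j ∈ Finset.range N,
      ((1 - z * p ^ j) * (1 - p ^ (j + 1) / z) * (1 - p ^ (j + 1))) = ∑' n, F N n := by
    intro N
    rw [Finset.prod_mul_distrib, finite_jtp p z hp hz t ht0 ht N]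
    rw [tsum_eq_sum (s := Finset.Icc (-(N : ℤ)) N) (by intro b hb; simp only [hF]; rw [if_neg hb])]
    change _ * qP p N = _
    rw [Finset.sum_mul]
    refine Finset.sum_bij' (fun k _ => (k : ℤ) - N) (fun n _ => (n + N).toNat) ?_ ?_ ?_ ?_ ?_
    · intro k hk; simp at hk ⊢; omega
    · intro n hn; simp at hn ⊢; omega
    · intro k hk; simp
    · intro n hn; simp at hn ⊢; omega
    · intro k hk
      have hk' : k ≤ 2 * N := by simp at hk; omega
      have hmem : (k : ℤ) - N ∈ Finset.Icc (-(N : ℤ)) N := by simp; omega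
      simp only [hF]
      rw [if_pos hmem]
      have e1 : ((N : ℤ) + ((k : ℤ) - N)).toNat = k := by omega
      have e2 : ((N : ℤ) - ((k : ℤ) - N)).toNat = 2 * N - k := by omega
      rw [e1, e2]
      have h := qb_mul p k (2 * N - k)
      rw [show 2 * N - k + k = 2 * N by omega] at h
      rw [← h]
      have := qP_ne p hp1 k
      have := qP_ne p hp1 (2 * N - k)
      field_simp
  simp_rw [key]
  refine tendsto_tsum_of_dominated_convergence (bound := fun n => A * (A * B * B) * ‖t n‖)
    (hs.mul_left _) ?_ ?_
  · intro n
    have c1 : Tendsto (fun N : ℕ => ((N : ℤ) + n).toNat) atTop atTop := by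
      refine tendsto_atTop.2 fun b => ?_
      filter_upwards [eventually_ge_atTop (b + n.natAbs)] with N hN
      omega
    have c2 : Tendsto (fun N : ℕ => ((N : ℤ) - n).toNat) atTop atTop := by
      refine tendsto_atTop.2 fun b => ?_
      filter_upwards [eventually_ge_atTop (b + n.natAbs)] with N hN
      omega
    have c3 : Tendsto (fun N : ℕ => 2 * N) atTop atTop := by
      refine tendsto_atTop.2 fun b => ?_
      filter_upwards [eventually_ge_atTop b] with N hN
      omega
    have L := (hlim.mul (((hlim.comp c3).mul (hinv.comp c1)).mul (hinv.comp c2))).mul_const (t n)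
    have e : φ * (φ * φ⁻¹ * φ⁻¹) * t n = t n := by field_simp
    rw [e] at L
    refine L.congr' ?_
    filter_upwards [eventually_ge_atTop n.natAbs] with N hN
    simp only [hF]
    rw [if_pos (by simp; omega)]
    rfl
  · refine Eventually.of_forall fun N n => ?_
    simp only [hF]
    split_ifs
    · rw [norm_mul, norm_mul, norm_mul, norm_mul]
      gcongr
      · exact hA' _
      · exact hA' _
      · exact hB' _
      · exact hB' _
    · simp; positivity

lemma mult1 (p z : ℂ) (hp1 : ‖p‖ < 1) : Multipliable fun j : ℕ => 1 - z * p ^ j := by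
  have : Multipliable fun j : ℕ => 1 + -(z * p ^ j) := by
    apply multipliable_one_add_of_summable
    simpa using (summable_geometric_of_lt_one (norm_nonneg _) hp1).mul_left ‖z‖
  simpa [sub_eq_add_neg] using this

lemma mult2 (p z : ℂ) (hp1 : ‖p‖ < 1) : Multipliable fun j : ℕ => 1 - p ^ (j + 1) / z := by
  have := mult1 p (p / z) hp1
  refine this.congr fun j => ?_
  ring

lemma mult3 (p : ℂ) (hp1 : ‖p‖ < 1) : Multipliable fun j : ℕ => 1 - p ^ (j + 1) := by
  have := mult1 p p hp1
  refine this.congr fun j => ?_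
  ring

lemma Theta_eq_s16 (w σ : ℂ) (hσ : 0 < σ.im) :
    Theta (Complex.exp (2 * Real.pi * I * σ)) (Complex.exp (2 * Real.pi * I * w))
      = jacobiTheta₂ (w - σ / 2 + 1 / 2) σ := by
  set p := Complex.exp (2 * Real.pi * I * σ) with hp
  set z := Complex.exp (2 * Real.pi * I * w) with hz
  have hp1 : ‖p‖ < 1 := by
    rw [hp, Complex.norm_exp, Real.exp_lt_one_iff]
    simp
    positivity
  have T := jtp_tendsto p z (Complex.exp_ne_zero _) hp1 (Complex.exp_ne_zero _)
    (fun n => jacobiTheta₂_term n (w - σ / 2 + 1 / 2) σ) (by simp [jacobiTheta₂_term]) (by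
      intro n
      simp only [jacobiTheta₂_term, hp, hz]
      rw [← Complex.exp_int_mul, neg_mul, neg_mul, ← Complex.exp_add, ← Complex.exp_add,
        ← Complex.exp_add_pi_mul_I]
      congr 1
      push_cast
      ring) ((summable_jacobiTheta₂_term_iff _ _).2 hσ).norm
  have hm : Multipliable fun j : ℕ =>
      ((1 - z * p ^ j) * (1 - p ^ (j + 1) / z) * (1 - p ^ (j + 1))) :=
    ((mult1 p z hp1).mul (mult2 p z hp1)).mul (mult3 p hp1)
  exact tendsto_nhds_unique hm.hasProd.tendsto_prod_nat T

lemma Theta_split (p z : ℂ) (hp1 : ‖p‖ < 1) (hz0 : z ≠ 0) (C : ℂ) (hC : z + z⁻¹ = 2 * C) :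
    Theta p z = (1 - z) * (∏' n : ℕ, (1 - p ^ (n + 1)))
      * ∏' n : ℕ, (1 - 2 * p ^ (n + 1) * C + p ^ (2 * (n + 1))) := by
  have m1 := mult1 p z hp1
  have m2 := mult2 p z hp1
  have m3 := mult3 p hp1
  have m1' : Multipliable fun j : ℕ => 1 - z * p ^ (j + 1) := by
    refine (mult1 p (z * p) hp1).congr fun j => ?_
    ring
  have h0 := tprod_eq_zero_mul' (f := fun j : ℕ => 1 - z * p ^ j) m1'
  have hc : ∀ n : ℕ, (1 - 2 * p ^ (n + 1) * C + p ^ (2 * (n + 1)))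
      = (1 - z * p ^ (n + 1)) * (1 - p ^ (n + 1) / z) := by
    intro n
    have : C = (z + z⁻¹) / 2 := by rw [hC]; ring
    rw [this]
    field_simp
    ring
  rw [tprod_congr hc, m1'.tprod_mul m2, Theta, (m1.mul m2).tprod_mul m3, m1.tprod_mul m2, h0]
  simp only [pow_zero]
  ring

lemma th1_eq_s16 (v σ : ℂ) (hσ : 0 < σ.im) :
    th1 v σ = I * Complex.exp (Real.pi * I * (σ / 4 - v))
      * jacobiTheta₂ (v - σ / 2 + 1 / 2) σ := by
  have hp1 : ‖Complex.exp (2 * Real.pi * I * σ)‖ < 1 := by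
    rw [Complex.norm_exp, Real.exp_lt_one_iff]
    simp
    positivity
  have hC : Complex.exp (2 * Real.pi * I * v) + (Complex.exp (2 * Real.pi * I * v))⁻¹
      = 2 * Complex.cos (2 * Real.pi * v) := by
    rw [Complex.cos, ← Complex.exp_neg, show 2 * Real.pi * v * I = 2 * Real.pi * I * v by ring,
      show -(2 * Real.pi * v) * I = -(2 * Real.pi * I * v) by ring]
    ring
  rw [← Theta_eq_s16 v σ hσ, Theta_split _ _ hp1 (Complex.exp_ne_zero _) _ hC, th1]
  have e1 : Complex.exp (2 * Real.pi * I * σ / 8) * Complex.sin (Real.pi * v) * 2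
      = I * Complex.exp (Real.pi * I * (σ / 4 - v)) * (1 - Complex.exp (2 * Real.pi * I * v)) := by
    rw [Complex.sin]
    have a1 : Complex.exp (Real.pi * I * (σ / 4 - v))
        = Complex.exp (2 * Real.pi * I * σ / 8) * Complex.exp (-(Real.pi * v) * I) := by
      rw [← Complex.exp_add]; congr 1; ring
    have a2 : Complex.exp (2 * Real.pi * I * v) * Complex.exp (-(Real.pi * v) * I)
        = Complex.exp (Real.pi * v * I) := by
      rw [← Complex.exp_add]; congr 1; ring
    rw [a1, ← a2]
    ring
  generalize (∏' n : ℕ, (1 - Complex.exp (2 * Real.pi * I * σ) ^ (n + 1))) = A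
  generalize (∏' n : ℕ, (1 - 2 * Complex.exp (2 * Real.pi * I * σ) ^ (n + 1)
    * Complex.cos (2 * Real.pi * v) + Complex.exp (2 * Real.pi * I * σ) ^ (2 * (n + 1)))) = B
  linear_combination A * B * e1

lemma th0_eq (v σ : ℂ) (hσ : 0 < σ.im) : th0 v σ = jacobiTheta₂ (v + 1 / 2) σ := by
  rw [th0, th1_eq_s16 _ _ hσ]
  have e : Complex.exp (Real.pi * I * (v + σ / 4)) * Complex.exp (Real.pi * I * (σ / 4 - (v + σ / 2)))
      = 1 := by
    rw [← Complex.exp_add, Complex.exp_eq_one_iff]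
    exact ⟨0, by push_cast; ring⟩
  rw [show v + σ / 2 - σ / 2 + 1 / 2 = v + 1 / 2 by ring]
  linear_combination jacobiTheta₂ (v + 1 / 2) σ * (e
    - Complex.exp (Real.pi * I * (v + σ / 4)) * Complex.exp (Real.pi * I * (σ / 4 - (v + σ / 2)))
      * (Complex.I_mul_I + 1))

lemma th3_eq (v σ : ℂ) (hσ : 0 < σ.im) : th3 v σ = jacobiTheta₂ v σ := by
  rw [th3, th1_eq_s16 _ _ hσ]
  have e : Complex.exp (Real.pi * I * (v + σ / 4))
      * Complex.exp (Real.pi * I * (σ / 4 - (v + (σ + 1) / 2))) * I = 1 := by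
    nth_rw 3 [← Complex.exp_pi_div_two_mul_I]
    rw [← Complex.exp_add, ← Complex.exp_add, Complex.exp_eq_one_iff]
    exact ⟨0, by push_cast; ring⟩
  rw [show v + (σ + 1) / 2 - σ / 2 + 1 / 2 = v + 1 by ring, jacobiTheta₂_add_left]
  linear_combination jacobiTheta₂ v σ * e

lemma th1_br (τ : ℂ) (r : ℝ) (hτ : 0 < τ.im) (hr : 0 < r) :
    ∃ c : ℂ, c ^ 2 = Cc τ r ^ 2 ∧ ∀ u, br τ r u = c * th1 (u / r) τ := by
  have hτ0 : τ ≠ 0 := by rintro rfl; simp at hτ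
  have hr0 : (r : ℂ) ≠ 0 := by exact_mod_cast hr.ne'
  have hS0 : (-I * τ) ^ (1 / 2 : ℂ) ≠ 0 := by
    rw [Ne, Complex.cpow_eq_zero_iff]; simp [hτ0]
  have hsq : ∀ x : ℂ, (x ^ (1 / 2 : ℂ)) ^ 2 = x := by
    intro x
    have := Complex.cpow_nat_inv_pow x (n := 2) (by norm_num)
    simpa only [one_div, Nat.cast_ofNat] using this
  have him : 0 < (-1 / τ).im := by
    rw [neg_div, neg_im, one_div, inv_im]
    have : 0 < normSq τ := normSq_pos.2 hτ0
    rw [neg_div, neg_neg]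
    positivity
  refine ⟨xp τ r (-(r : ℂ) / 4) * (-I * τ) ^ (1 / 2 : ℂ), ?_, ?_⟩
  · rw [Cc, mul_pow, mul_pow, mul_pow, hsq, hsq, ← Complex.exp_nat_mul]
    have : Complex.exp (((2 : ℕ) : ℂ) * (-(Real.pi : ℂ) * I / 4)) = -I := by
      rw [show ((2 : ℕ) : ℂ) * (-(Real.pi : ℂ) * I / 4) = -(Real.pi / 2 * I) by push_cast; ring,
        Complex.exp_neg, Complex.exp_pi_div_two_mul_I, Complex.inv_I]
    rw [this]; ring
  · intro u
    obtain ⟨v, rfl⟩ : ∃ v, u = r * v := ⟨u / r, by field_simp⟩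
    rw [mul_div_cancel_left₀ _ hr0, br]
    have a1 : xp τ r (2 * (r : ℂ)) = Complex.exp (2 * Real.pi * I * (-1 / τ)) := by
      rw [xp]; congr 1; field_simp
    have a2 : xp τ r (2 * (r * v)) = Complex.exp (2 * Real.pi * I * (-v / τ)) := by
      rw [xp]; congr 1; field_simp
    rw [a1, a2, Theta_eq_s16 _ _ him, th1_eq_s16 _ _ hτ]
    have fe := jacobiTheta₂_functional_equation (-v + 1 / 2 + τ / 2) τ
    have a3 : (-v + 1 / 2 + τ / 2) / τ = -v / τ - (-1 / τ) / 2 + 1 / 2 := by field_simp; ring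
    have a4 : jacobiTheta₂ (-v + 1 / 2 + τ / 2) τ = jacobiTheta₂ (v - τ / 2 + 1 / 2) τ := by
      rw [← jacobiTheta₂_neg_left, ← jacobiTheta₂_add_left]
      congr 1; ring
    rw [a3, a4] at fe
    rw [fe]
    have a5 : xp τ r ((r * v) ^ 2 / r - r * v)
        = xp τ r (-(r : ℂ) / 4) * (Complex.exp (Real.pi / 2 * I)
          * Complex.exp (Real.pi * I * (τ / 4 - v))
          * Complex.exp (-Real.pi * I * (-v + 1 / 2 + τ / 2) ^ 2 / τ)) := by
      rw [xp, xp, ← Complex.exp_add, ← Complex.exp_add, ← Complex.exp_add]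
      congr 1; field_simp; ring
    rw [Complex.exp_pi_div_two_mul_I] at a5
    rw [a5]
    field_simp

lemma theta_prod (x y τ : ℂ) (hτ : 0 < τ.im) :
    jacobiTheta₂ (x + y) (τ / 2) * jacobiTheta₂ (x - y + 1 / 2) (τ / 2)
      - jacobiTheta₂ (x + y + 1 / 2) (τ / 2) * jacobiTheta₂ (x - y) (τ / 2)
      = -2 * (th1 (2 * x) τ * th1 (2 * y) τ) := by
  have hτ2 : 0 < (τ / 2).im := by simp; exact hτ
  have S2 : ∀ z, Summable fun n => ‖jacobiTheta₂_term n z (τ / 2)‖ := fun z =>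
    ((summable_jacobiTheta₂_term_iff _ _).2 hτ2).norm
  have S1 : ∀ z, Summable fun n => ‖jacobiTheta₂_term n z τ‖ := fun z =>
    ((summable_jacobiTheta₂_term_iff _ _).2 hτ).norm
  rw [th1_eq_s16 _ _ hτ, th1_eq_s16 _ _ hτ]
  have e0 : -2 * (I * Complex.exp (Real.pi * I * (τ / 4 - 2 * x))
      * jacobiTheta₂ (2 * x - τ / 2 + 1 / 2) τ * (I * Complex.exp (Real.pi * I * (τ / 4 - 2 * y))
      * jacobiTheta₂ (2 * y - τ / 2 + 1 / 2) τ))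
      = 2 * Complex.exp (Real.pi * I * (τ / 2 - 2 * x - 2 * y))
        * (jacobiTheta₂ (2 * x - τ / 2 + 1 / 2) τ * jacobiTheta₂ (2 * y - τ / 2 + 1 / 2) τ) := by
    have : Complex.exp (Real.pi * I * (τ / 2 - 2 * x - 2 * y))
        = Complex.exp (Real.pi * I * (τ / 4 - 2 * x)) * Complex.exp (Real.pi * I * (τ / 4 - 2 * y)) := by
      rw [← Complex.exp_add]; congr 1; ring
    rw [this]
    linear_combination (-2) * Complex.exp (Real.pi * I * (τ / 4 - 2 * x))
      * jacobiTheta₂ (2 * x - τ / 2 + 1 / 2) τ * Complex.exp (Real.pi * I * (τ / 4 - 2 * y))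
      * jacobiTheta₂ (2 * y - τ / 2 + 1 / 2) τ * Complex.I_mul_I
  rw [e0]
  unfold jacobiTheta₂
  rw [tsum_mul_tsum_of_summable_norm (S2 _) (S2 _), tsum_mul_tsum_of_summable_norm (S2 _) (S2 _),
    tsum_mul_tsum_of_summable_norm (S1 _) (S1 _),
    ← (summable_mul_of_summable_norm (S2 _) (S2 _)).tsum_sub
      (summable_mul_of_summable_norm (S2 _) (S2 _)), ← tsum_mul_left]
  -- half shift
  have hsh : ∀ (n : ℤ) (z : ℂ), jacobiTheta₂_term n (z + 1 / 2) (τ / 2)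
      = (-1) ^ n * jacobiTheta₂_term n z (τ / 2) := by
    intro n z
    rw [jacobiTheta₂_term, jacobiTheta₂_term, ← Complex.exp_pi_mul_I, ← Complex.exp_int_mul,
      ← Complex.exp_add]
    congr 1; ring
  set g : ℤ × ℤ → ℤ × ℤ := fun q => (q.1 + q.2 - 1, q.1 - q.2) with hg
  have hinj : Function.Injective g := by
    rintro ⟨a, b⟩ ⟨c, d⟩ h
    simp only [hg, Prod.mk.injEq] at h
    ext <;> simp <;> omega
  rw [← hinj.tsum_eq]
  · refine tsum_congr ?_
    rintro ⟨j, k⟩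
    simp only [hg, hsh]
    have s1 : ((-1 : ℂ)) ^ (j + k - 1) = - (-1) ^ (j - k) := by
      rw [show j + k - 1 = (j - k) + (2 * k - 1) by ring, zpow_add₀ (by norm_num),
        (show Odd (2 * k - 1) from ⟨k - 1, by ring⟩).neg_one_zpow]
      ring
    have s2 : ((-1 : ℂ)) ^ (j - k) = (-1) ^ (j + k) := by
      rw [show j + k = (j - k) + 2 * k by ring, zpow_add₀ (by norm_num),
        (show Even (2 * k) from ⟨k, by ring⟩).neg_one_zpow]
      ring
    rw [s1, s2]
    have h1 : (-1 : ℂ) ^ (j + k) * (jacobiTheta₂_term (j + k - 1) (x + y) (τ / 2)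
          * jacobiTheta₂_term (j - k) (x - y) (τ / 2))
        = Complex.exp (Real.pi * I * (τ / 2 - 2 * x - 2 * y))
          * (jacobiTheta₂_term j (2 * x - τ / 2 + 1 / 2) τ
            * jacobiTheta₂_term k (2 * y - τ / 2 + 1 / 2) τ) := by
      simp only [jacobiTheta₂_term]
      rw [← Complex.exp_pi_mul_I, ← Complex.exp_int_mul, ← Complex.exp_add, ← Complex.exp_add,
        ← Complex.exp_add, ← Complex.exp_add]
      congr 1; push_cast; ring
    linear_combination 2 * h1
  · rintro ⟨m, n⟩ hmn
    rcases Int.even_or_odd (m + n) with h | h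
    · exfalso
      apply hmn
      simp only [hsh]
      have : (-1 : ℂ) ^ m = (-1) ^ n := by
        rw [show m = (m + n) + (-n) by ring, zpow_add₀ (by norm_num), h.neg_one_zpow, one_mul,
          zpow_neg, ← inv_zpow]
        norm_num
      rw [this]
      ring
    · obtain ⟨k, hk⟩ := h
      refine ⟨(k + 1, k + 1 - n), ?_⟩
      simp only [hg, Prod.mk.injEq]
      omega

lemma th1_neg (v σ : ℂ) : th1 (-v) σ = - th1 v σ := by
  simp [th1]

/-- First inversion relation for intertwining vectors. -/
theorem inversion_first (τ : ℂ) (r : ℝ) (hτ : 0 < τ.im) (hr : 0 < r)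
    (a b c : ℤ) (hab : |a - b| = 1) (hbc : |b - c| = 1) (u : ℂ)
    (hu : br τ r u ≠ 0) (hb : br τ r (b : ℂ) ≠ 0) :
    ∑ ε ∈ ({1, -1} : Finset ℤ), psiStar τ r u ε a b * psi τ r u ε b c =
      if a = c then 1 else 0 := by
  have hr0 : (r : ℂ) ≠ 0 := by exact_mod_cast hr.ne'
  have hτ2 : 0 < (τ / 2).im := by simp; exact hτ
  rw [Finset.sum_pair (by norm_num)]
  simp only [psiStar, psi, neg_neg]
  norm_num
  rw [th0_eq _ _ hτ2, th0_eq _ _ hτ2, th3_eq _ _ hτ2, th3_eq _ _ hτ2]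
  obtain ⟨s, hs⟩ : ∃ s : ℤ, s = a - b := ⟨_, rfl⟩
  have ha : a = b + s := by omega
  have hs1 : s = 1 ∨ s = -1 := by
    rw [← hs] at hab; exact eq_or_eq_neg_of_abs_eq hab
  split_ifs with hac
  · subst hac
    subst ha
    obtain ⟨C, hC, hbr⟩ := th1_br τ r hτ hr
    have P := theta_prod (b / (2 * r)) (s * u / (2 * r)) τ hτ
    have e1 : ((((b + s : ℤ) : ℂ) - b) * (u - 1) + ((b + s : ℤ) : ℂ)) / (2 * r)
      = b / (2 * r) + s * u / (2 * r) := by push_cast; ring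
    have e2 : (((b : ℂ) - ((b + s : ℤ) : ℂ)) * u + b) / (2 * r)
      = b / (2 * r) - s * u / (2 * r) := by push_cast; ring
    have e3 : 2 * ((b : ℂ) / (2 * r)) = b / r := by field_simp
    have e4 : 2 * (s * u / (2 * r)) = s * (u / r) := by field_simp
    rw [e3, e4] at P
    have e5 : th1 (s * (u / r)) τ = s * th1 (u / r) τ := by
      rcases hs1 with rfl | rfl
      · simp
      · simp [th1_neg]
    have hss : (s : ℂ) * s = 1 := by rcases hs1 with rfl | rfl <;> norm_num
    rw [e5] at P
    have e6 : ((b + s : ℤ) : ℂ) - b = s := by push_cast; ring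
    push_cast at e1 e2 e6 ⊢
    rw [e1, e2, e6, ← hC]
    have hb' := hbr b
    have hu' := hbr u
    generalize jacobiTheta₂ (b / (2 * r) + s * u / (2 * r)) (τ / 2) = A1 at P ⊢
    generalize jacobiTheta₂ (b / (2 * r) - s * u / (2 * r) + 1 / 2) (τ / 2) = A2 at P ⊢
    generalize jacobiTheta₂ (b / (2 * r) + s * u / (2 * r) + 1 / 2) (τ / 2) = A3 at P ⊢
    generalize jacobiTheta₂ (b / (2 * r) - s * u / (2 * r)) (τ / 2) = A4 at P ⊢
    field_simp
    rw [hb', hu']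
    linear_combination (-(s : ℂ) * C ^ 2) * P + 2 * C ^ 2 * th1 (b / r) τ * th1 (u / r) τ * hss
  · have hc : c = b - s := by
      have := eq_or_eq_neg_of_abs_eq hbc
      omega
    have e : (((a : ℂ) - b) * (u - 1) + a) / (2 * r) = (((b : ℂ) - c) * u + b) / (2 * r) := by
      rw [ha, hc]; push_cast; ring
    rw [e]
    ring

end Ell
end
end
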